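/- For all positive integers Δ and n with Δ ≡ 0 (mod 4) and n ≡ 0 (mod 5(Δ/2 − 1)), there is a chordal, K_{3,3}-minor-free graph G with |V(G)| = n, maximum degree Δ, and crossing number cr(G) = (Δn/40)·(1 + 2/(Δ−2)) > Δn/40. -/

import Mathlib

open Finset

/-- A drawing of a graph `G` in the plane: vertices are represented by distinct points,
and each edge by a simple continuous arc between (the points of) its endpoints, meeting
vertex points only at its own endpoints. -/
structure Drawing {V : Type*} (G : SimpleGraph V) where
  pos : V → ℝ × ℝ
  pos_inj : Function.Injective pos
  arc : G.edgeSet → Set.Icc (0 : ℝ) 1 → ℝ × ℝ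
  arc_cont : ∀ e, Continuous (arc e)
  arc_inj : ∀ e, Function.Injective (arc e)
  arc_ends : ∀ (e : G.edgeSet) (v w : V), (e : Sym2 V) = s(v, w) →
    (arc e ⟨0, by norm_num⟩ = pos v ∧ arc e ⟨1, by norm_num⟩ = pos w) ∨
    (arc e ⟨0, by norm_num⟩ = pos w ∧ arc e ⟨1, by norm_num⟩ = pos v)
  arc_avoid : ∀ (e : G.edgeSet) (x : V) (t : Set.Icc (0 : ℝ) 1),
    arc e t = pos x → x ∈ (e : Sym2 V)

/-- The crossings of a drawing, recorded as ordered triples `(p, e, f)` where `p` is a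
point lying on the arcs of the two distinct edges `e ≠ f` and `p` is not the image of a
common endpoint of `e` and `f`.  Each crossing is thereby counted twice. -/
def crossingTriples {V : Type*} {G : SimpleGraph V} (D : Drawing G) :
    Set ((ℝ × ℝ) × G.edgeSet × G.edgeSet) :=
  {q | q.2.1 ≠ q.2.2 ∧ q.1 ∈ Set.range (D.arc q.2.1) ∧ q.1 ∈ Set.range (D.arc q.2.2) ∧
    ¬∃ x : V, x ∈ (q.2.1 : Sym2 V) ∧ x ∈ (q.2.2 : Sym2 V) ∧ q.1 = D.pos x}

/-- The crossing number of `G`: the least `n` such that `G` has a drawing with (finitely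
many and) at most `n` crossings, each crossing being counted twice among the ordered
`crossingTriples`. -/
noncomputable def crossingNumber {V : Type*} (G : SimpleGraph V) : ℕ :=
  sInf {n : ℕ | ∃ D : Drawing G, (crossingTriples D).Finite ∧
    (crossingTriples D).ncard ≤ 2 * n}

/-- `H` is a minor of `G`: there are pairwise disjoint nonempty connected branch sets in
`G`, one for each vertex of `H`, with an edge of `G` between the branch sets of any two
adjacent vertices of `H`. -/
def IsMinor {α β : Type*} (H : SimpleGraph α) (G : SimpleGraph β) : Prop :=
  ∃ B : α → Set β,
    (∀ a, (B a).Nonempty) ∧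
    (∀ a, (G.induce (B a)).Connected) ∧
    (Pairwise fun a b => Disjoint (B a) (B b)) ∧
    ∀ a b, H.Adj a b → ∃ u ∈ B a, ∃ v ∈ B b, G.Adj u v

/-- `G` has a perfect elimination ordering: a linear order of the vertices such that the
earlier neighbours of each vertex form a clique.  A finite graph is chordal (every
induced cycle is a triangle) iff it has a perfect elimination ordering. -/
def HasPerfectEliminationOrdering {V : Type*} (G : SimpleGraph V) : Prop :=
  ∃ o : LinearOrder V, ∀ v : V, G.IsClique {w : V | G.Adj v w ∧ o.lt w v}

/-!
The graph consists of disjoint copies of a thickened `K₅`, in which every edge `vw` comes with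
`r = Δ / 4 - 1` further paths `v - x - w`, so that `v` and `w` are joined by `r + 1` parallel
strands.

Lower bound. Choosing one strand for each edge turns a drawing of the thickened graph into a drawing
of `K₅`, in which two strands of disjoint edges of `K₅` meet. Every pair of strands is met by an
equal share of the choices, so at least `(r + 1) ^ 2` pairs of strands cross. That two disjoint
edges of a drawn `K₅` meet is a parity argument: if the curves `α` and `β` are disjoint, then
`α s - β t` has a continuous logarithm on the square, whose increments along the four sides satisfy
a linear relation. Modulo `4πi`, the sum of these relations over the fifteen pairs of disjoint edges
does not depend on the curves, and each of the five interlacing pairs contributes `2πi` to it.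

Upper bound. Put the vertices of `K₅` on a line and draw the strands as parabolic arches above or
below it, so that the strands of two edges meet, exactly once, only if the edges interlace and lie
on the same side. For `K₅` two sides suffice to leave a single such pair of edges. Copies of the
drawing are placed side by side by squeezing the plane into vertical strips.
-/

/-! ### Logarithm increments and curves joining five points -/

section LogIncrement

lemma exists_continuous_log {X : Type*} [TopologicalSpace X] [SimplyConnectedSpace X]
    [LocallyPathConnectedSpace X] {f : X → ℂ} (hf : Continuous f) (hf0 : ∀ x, f x ≠ 0) :
    ∃ L : X → ℂ, Continuous L ∧ ∀ x, Complex.exp (L x) = f x := by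
  obtain ⟨x₀⟩ : Nonempty X := inferInstance
  obtain ⟨F, ⟨-, hF⟩, -⟩ := Complex.isCoveringMapOn_exp.existsUnique_continuousMap_lifts
    (⟨f, hf⟩ : C(X, ℂ)) (a₀ := x₀) (Complex.exp_log (hf0 x₀)) hf0
  exact ⟨F, F.continuous, congrFun hF⟩

lemma sub_eq_sub_of_exp_eq {X : Type*} [TopologicalSpace X] [SimplyConnectedSpace X]
    [LocallyPathConnectedSpace X] {L L' : X → ℂ} (hL : Continuous L) (hL' : Continuous L')
    (h : ∀ x, Complex.exp (L x) = Complex.exp (L' x)) (x y : X) :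
    L y - L x = L' y - L' x := by
  obtain ⟨F, -, hF⟩ := Complex.isCoveringMapOn_exp.existsUnique_continuousMap_lifts
    (⟨fun z => Complex.exp (L z), by fun_prop⟩ : C(X, ℂ)) (a₀ := x) (e₀ := L x) rfl
    fun _ => Complex.exp_ne_zero _
  have hshift : Complex.exp (L x - L' x) = 1 := by
    rw [Complex.exp_sub, h, div_self (Complex.exp_ne_zero _)]
  have heq := (hF ⟨fun z => L' z + (L x - L' x), by fun_prop⟩ ⟨by simp, funext fun z => by
    simp [Complex.exp_add, hshift, h]⟩).trans (hF ⟨L, hL⟩ ⟨rfl, rfl⟩).symm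
  have heq' : L' y + (L x - L' x) = L y := DFunLike.congr_fun heq y
  linear_combination -heq'

open Classical in
/-- The change along `[0, 1]` of a continuous logarithm of `f`; it is `0` by convention when `f`
has no continuous logarithm. -/
noncomputable def logIncrement (f : ℝ → ℂ) : ℂ :=
  if h : ∃ L : ℝ → ℂ, Continuous L ∧ ∀ t, Complex.exp (L t) = f t then h.choose 1 - h.choose 0
  else 0

lemma logIncrement_eq {f L : ℝ → ℂ} (hL : Continuous L) (h : ∀ t, Complex.exp (L t) = f t) :
    logIncrement f = L 1 - L 0 := by
  have hex : ∃ L : ℝ → ℂ, Continuous L ∧ ∀ t, Complex.exp (L t) = f t := ⟨L, hL, h⟩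
  rw [logIncrement, dif_pos hex]
  exact sub_eq_sub_of_exp_eq hex.choose_spec.1 hL
    (fun t => (hex.choose_spec.2 t).trans (h t).symm) 0 1

lemma exp_logIncrement {f : ℝ → ℂ} (hf : Continuous f) (hf0 : ∀ t, f t ≠ 0) :
    Complex.exp (logIncrement f) = f 1 / f 0 := by
  obtain ⟨L, hL, h⟩ := exists_continuous_log hf hf0
  rw [logIncrement_eq hL h, Complex.exp_sub, h, h]

-- All four increments are read off one logarithm of `α s - β t` on the square.
lemma logIncrement_sub_add_logIncrement_sub {α β : ℝ → ℂ} (hα : Continuous α) (hβ : Continuous β)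
    (h : ∀ s t, α s ≠ β t) :
    logIncrement (fun s => α s - β 0) + logIncrement (fun t => β t - α 1) =
      logIncrement (fun t => β t - α 0) + logIncrement (fun s => α s - β 1) := by
  obtain ⟨M, hM, hexp⟩ := exists_continuous_log (X := ℝ × ℝ) (f := fun q => α q.1 - β q.2)
    (by fun_prop) fun q => sub_ne_zero.2 (h _ _)
  have hneg (s t : ℝ) : Complex.exp (M (s, t) + Real.pi * Complex.I) = β t - α s := by
    rw [Complex.exp_add, hexp, Complex.exp_pi_mul_I, mul_neg_one, neg_sub]
  rw [logIncrement_eq (L := fun s => M (s, 0)) (by fun_prop) fun s => hexp (s, 0),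
    logIncrement_eq (L := fun t => M (1, t) + Real.pi * Complex.I) (by fun_prop) (hneg 1),
    logIncrement_eq (L := fun t => M (0, t) + Real.pi * Complex.I) (by fun_prop) (hneg 0),
    logIncrement_eq (L := fun s => M (s, 1)) (by fun_prop) fun s => hexp (s, 1)]
  ring

end LogIncrement

section VanKampen

/-- Whenever the edges of `H` are represented by curves in the plane, two edges without a common
endpoint get curves that meet. -/
def IndependentEdgesMeet {α : Type*} (H : SimpleGraph α) : Prop :=
  ∀ (p : α → ℝ × ℝ) (γ : ∀ a b, H.Adj a b → Path (p a) (p b)),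
    ∃ (a b c d : α) (hab : H.Adj a b) (hcd : H.Adj c d),
      [a, b, c, d].Nodup ∧ ∃ s t, γ a b hab s = γ c d hcd t

/-- A logarithm of `p y - p x`, chosen so that exchanging `x < y` adds exactly `πi` to it. -/
noncomputable def chordLog {ι : Type*} [LinearOrder ι] (p : ι → ℂ) (x y : ι) : ℂ :=
  if x < y then Complex.log (p y - p x) else Complex.log (p x - p y) + Real.pi * Complex.I

lemma exp_chordLog {ι : Type*} [LinearOrder ι] {p : ι → ℂ} {x y : ι} (h : p x ≠ p y) :
    Complex.exp (chordLog p x y) = p y - p x := by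
  unfold chordLog
  split_ifs
  · exact Complex.exp_log (sub_ne_zero.2 h.symm)
  · rw [Complex.exp_add, Complex.exp_log (sub_ne_zero.2 h), Complex.exp_pi_mul_I, mul_neg_one,
      neg_sub]

lemma chordLog_sub_chordLog_swap {ι : Type*} [LinearOrder ι] (p : ι → ℂ) {x y : ι} (h : x ≠ y) :
    chordLog p x y - chordLog p y x =
      ((if x < y then -1 else 1 : ℤ) : ℂ) * (Real.pi * Complex.I) := by
  unfold chordLog
  rcases h.lt_or_gt with h | h <;> simp [h, h.not_gt]

-- Each `n i j x` occurs in exactly two of the fifteen equations, so the terms with `n` add up to a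
-- multiple of `4`, whereas the four signs add up to `±2` for each of the five interlacing pairs of
-- edges and to `0` for the others.
lemma exists_sign_sum_add_two_mul_ne_zero (n : Fin 5 → Fin 5 → Fin 5 → ℤ) :
    ∃ i j k m, i < j ∧ k < m ∧ [i, j, k, m].Nodup ∧
      (if k < j then -1 else 1) + (if j < m then -1 else 1) + (if m < i then -1 else 1)
        + (if i < k then -1 else 1) + 2 * (n i j k + n k m j - n k m i - n i j m) ≠ 0 := by
  by_contra! h
  have h₁ := h 0 1 2 3 (by decide) (by decide) (by decide)
  have h₂ := h 0 2 1 3 (by decide) (by decide) (by decide)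
  have h₃ := h 0 3 1 2 (by decide) (by decide) (by decide)
  have h₄ := h 0 1 2 4 (by decide) (by decide) (by decide)
  have h₅ := h 0 2 1 4 (by decide) (by decide) (by decide)
  have h₆ := h 0 4 1 2 (by decide) (by decide) (by decide)
  have h₇ := h 0 1 3 4 (by decide) (by decide) (by decide)
  have h₈ := h 0 3 1 4 (by decide) (by decide) (by decide)
  have h₉ := h 0 4 1 3 (by decide) (by decide) (by decide)
  have h₁₀ := h 0 2 3 4 (by decide) (by decide) (by decide)
  have h₁₁ := h 0 3 2 4 (by decide) (by decide) (by decide)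
  have h₁₂ := h 0 4 2 3 (by decide) (by decide) (by decide)
  have h₁₃ := h 1 2 3 4 (by decide) (by decide) (by decide)
  have h₁₄ := h 1 3 2 4 (by decide) (by decide) (by decide)
  have h₁₅ := h 1 4 2 3 (by decide) (by decide) (by decide)
  simp only [Fin.reduceLT, if_true, if_false] at *
  omega

lemma exists_logIncrement_eq_chordLog {ι : Type*} [LinearOrder ι] {p : ι → ℂ} {i j x : ι}
    {f : ℝ → ℂ} (hf : Continuous f) (h0 : f 0 = p i) (h1 : f 1 = p j) (hx : ∀ s, f s ≠ p x) :
    ∃ n : ℤ, logIncrement (fun s => f s - p x) =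
      chordLog p x j - chordLog p x i + n * (2 * Real.pi * Complex.I) := by
  refine Complex.exp_eq_exp_iff_exists_int.1 ?_
  rw [exp_logIncrement (by fun_prop) fun s => sub_ne_zero.2 (hx s), Complex.exp_sub,
    exp_chordLog (h1 ▸ (hx 1).symm), exp_chordLog (h0 ▸ (hx 0).symm), h0, h1]

lemma exists_forall_logIncrement_eq_chordLog {ι : Type*} [LinearOrder ι] {p : ι → ℂ}
    {γ : ι → ι → ℝ → ℂ} (hc : ∀ i j, i < j → Continuous (γ i j))
    (h0 : ∀ i j, i < j → γ i j 0 = p i) (h1 : ∀ i j, i < j → γ i j 1 = p j)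
    (havoid : ∀ i j x, i < j → x ≠ i → x ≠ j → ∀ s, γ i j s ≠ p x) :
    ∃ n : ι → ι → ι → ℤ, ∀ i j x, i < j → x ≠ i → x ≠ j →
      logIncrement (fun s => γ i j s - p x) =
        chordLog p x j - chordLog p x i + n i j x * (2 * Real.pi * Complex.I) := by
  choose! n hn using fun (i j x : ι) (h : i < j ∧ x ≠ i ∧ x ≠ j) =>
    exists_logIncrement_eq_chordLog (hc i j h.1) (h0 i j h.1) (h1 i j h.1)
      (havoid i j x h.1 h.2.1 h.2.2)
  exact ⟨n, fun i j x hij hi hj => hn i j x ⟨hij, hi, hj⟩⟩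

lemma exists_independent_curves_meet_complex (p : Fin 5 → ℂ) (γ : Fin 5 → Fin 5 → ℝ → ℂ)
    (hc : ∀ i j, i < j → Continuous (γ i j)) (h0 : ∀ i j, i < j → γ i j 0 = p i)
    (h1 : ∀ i j, i < j → γ i j 1 = p j) :
    ∃ i j k m, i < j ∧ k < m ∧ [i, j, k, m].Nodup ∧ ∃ s t, γ i j s = γ k m t := by
  by_contra! hdisj
  have havoid (i j x : Fin 5) (hij : i < j) (hxi : x ≠ i) (hxj : x ≠ j) (s : ℝ) :
      γ i j s ≠ p x := by
    obtain ⟨y, hy, hy'⟩ : ∃ y, x ≠ y ∧ [i, j, x, y].Nodup := by revert i j x; decide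
    rcases hy.lt_or_gt with h | h
    · exact h0 x y h ▸ hdisj i j x y hij h hy' s 0
    · exact h1 y x h ▸ hdisj i j y x hij h
        ((((List.Perm.swap y x []).cons j).cons i).nodup_iff.1 hy') s 1
  obtain ⟨n, hn⟩ := exists_forall_logIncrement_eq_chordLog hc h0 h1 havoid
  obtain ⟨i, j, k, m, hij, hkm, hnodup, hne⟩ := exists_sign_sum_add_two_mul_ne_zero n
  obtain ⟨-, ⟨hik, him⟩, hjk, hjm, -⟩ :
      i ≠ j ∧ (i ≠ k ∧ i ≠ m) ∧ j ≠ k ∧ j ≠ m ∧ k ≠ m := by simpa [and_assoc] using hnodup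
  have hquad := logIncrement_sub_add_logIncrement_sub (hc i j hij) (hc k m hkm)
    (hdisj i j k m hij hkm hnodup)
  rw [h0 k m hkm, h1 i j hij, h0 i j hij, h1 k m hkm, hn i j k hij hik.symm hjk.symm,
    hn k m j hkm hjk hjm, hn k m i hkm hik him, hn i j m hij him.symm hjm.symm] at hquad
  refine hne ?_
  have hpi : (Real.pi * Complex.I : ℂ) ≠ 0 := by simp [Real.pi_ne_zero]
  refine Int.cast_injective (α := ℂ) (mul_right_cancel₀ hpi ?_)
  have hkj := chordLog_sub_chordLog_swap p hjk.symm
  have hjm' := chordLog_sub_chordLog_swap p hjm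
  have hmi := chordLog_sub_chordLog_swap p him.symm
  have hik' := chordLog_sub_chordLog_swap p hik
  rw [Int.cast_add, Int.cast_add, Int.cast_add, Int.cast_add]
  push_cast at hkj hjm' hmi hik' ⊢
  linear_combination hquad - hkj - hjm' - hmi - hik'

theorem independentEdgesMeet_top_fin_five : IndependentEdgesMeet (⊤ : SimpleGraph (Fin 5)) := by
  intro p γ
  obtain ⟨i, j, k, m, hij, hkm, hnodup, s, t, hst⟩ := exists_independent_curves_meet_complex
    (fun i => Complex.equivRealProdCLM.symm (p i))
    (fun i j s => if h : i < j then Complex.equivRealProdCLM.symm ((γ i j h.ne).extend s) else 0)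
    (fun i j h => by simpa only [dif_pos h] using by fun_prop) (fun i j h => by simp [h])
    (fun i j h => by simp [h])
  rw [dif_pos hij, dif_pos hkm, EquivLike.apply_eq_iff_eq] at hst
  exact ⟨i, j, k, m, hij.ne, hkm.ne, hnodup, _, _, hst⟩

end VanKampen

/-! ### Drawings, crossing numbers and minors -/

section Drawings

variable {V W : Type*} {G : SimpleGraph V} {H : SimpleGraph W}

lemma mem_mapEdgeSet_iff {f : G →g H} {e : G.edgeSet} {w : W} :
    w ∈ (f.mapEdgeSet e : Sym2 W) ↔ ∃ v ∈ (e : Sym2 V), f v = w :=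
  Sym2.mem_map

/-- The drawing of `G` obtained by following an injective homomorphism into the drawn graph `H`. -/
def Drawing.comap (D : Drawing H) (f : G →g H) (hf : Function.Injective f) : Drawing G where
  pos := D.pos ∘ f
  pos_inj := D.pos_inj.comp hf
  arc e := D.arc (f.mapEdgeSet e)
  arc_cont _ := D.arc_cont _
  arc_inj _ := D.arc_inj _
  arc_ends e v w h := D.arc_ends _ _ _ (congrArg (Sym2.map f) h)
  arc_avoid e x t h := by
    obtain ⟨y, hy, hyx⟩ := mem_mapEdgeSet_iff.1 (D.arc_avoid _ _ t h)
    exact hf hyx ▸ hy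

lemma Drawing.mapsTo_crossingTriples_comap (D : Drawing H) (f : G →g H)
    (hf : Function.Injective f) :
    Set.MapsTo (Prod.map id (Prod.map f.mapEdgeSet f.mapEdgeSet))
      (crossingTriples (D.comap f hf)) (crossingTriples D) := by
  rintro ⟨p, e, e'⟩ ⟨hne, he, he', hends⟩
  refine ⟨(SimpleGraph.Hom.mapEdgeSet.injective f hf).ne hne, he, he', ?_⟩
  rintro ⟨w, hw, hw', hp⟩
  obtain ⟨v, hv, rfl⟩ := mem_mapEdgeSet_iff.1 hw
  obtain ⟨v', hv', hvv'⟩ := mem_mapEdgeSet_iff.1 hw'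
  exact hends ⟨v, hv, hf hvv' ▸ hv', hp⟩

lemma injective_prodMap_mapEdgeSet {f : G →g H} (hf : Function.Injective f) :
    Function.Injective (Prod.map (id : ℝ × ℝ → ℝ × ℝ) (Prod.map f.mapEdgeSet f.mapEdgeSet)) :=
  Function.injective_id.prodMap
    ((SimpleGraph.Hom.mapEdgeSet.injective f hf).prodMap
      (SimpleGraph.Hom.mapEdgeSet.injective f hf))

lemma Drawing.finite_crossingTriples_comap {D : Drawing H} (hD : (crossingTriples D).Finite)
    (f : G →g H) (hf : Function.Injective f) : (crossingTriples (D.comap f hf)).Finite :=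
  hD.of_injOn (D.mapsTo_crossingTriples_comap f hf) (injective_prodMap_mapEdgeSet hf).injOn

lemma Drawing.ncard_crossingTriples_comap_le {D : Drawing H} (hD : (crossingTriples D).Finite)
    (f : G →g H) (hf : Function.Injective f) :
    (crossingTriples (D.comap f hf)).ncard ≤ (crossingTriples D).ncard :=
  Set.ncard_le_ncard_of_injOn _ (D.mapsTo_crossingTriples_comap f hf)
    (injective_prodMap_mapEdgeSet hf).injOn hD

lemma crossingNumber_congr (φ : G ≃g H) : crossingNumber G = crossingNumber H := by
  refine congrArg sInf (Set.ext fun n => ⟨?_, ?_⟩) <;> rintro ⟨D, hD, hn⟩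
  · exact ⟨_, Drawing.finite_crossingTriples_comap hD φ.symm.toHom φ.symm.injective,
      (Drawing.ncard_crossingTriples_comap_le hD _ _).trans hn⟩
  · exact ⟨_, Drawing.finite_crossingTriples_comap hD φ.toHom φ.injective,
      (Drawing.ncard_crossingTriples_comap_le hD _ _).trans hn⟩

lemma swap_mem_crossingTriples {D : Drawing G} {p : ℝ × ℝ} {e e' : G.edgeSet}
    (h : (p, e, e') ∈ crossingTriples D) : (p, e', e) ∈ crossingTriples D := by
  obtain ⟨hne, he, he', hends⟩ := h
  exact ⟨hne.symm, he', he, fun ⟨x, hx, hx', hp⟩ => hends ⟨x, hx', hx, hp⟩⟩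

lemma even_ncard_crossingTriples (D : Drawing G) : Even (crossingTriples D).ncard := by
  classical
  rcases (crossingTriples D).finite_or_infinite with hfin | hinf
  · rw [Set.ncard_eq_toFinset_card _ hfin, ← ZMod.natCast_eq_zero_iff_even,
      Finset.cast_card]
    refine Finset.sum_involution (fun q _ => (q.1, q.2.swap)) (fun _ _ => by decide) ?_ ?_
      (fun _ _ => rfl)
    · rintro ⟨p, e, f⟩ hq - heq
      exact (hfin.mem_toFinset.1 hq).1 (congrArg (fun q => q.2.2) heq)
    · rintro ⟨p, e, f⟩ hq
      exact hfin.mem_toFinset.2 (swap_mem_crossingTriples (hfin.mem_toFinset.1 hq))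
  · simp [hinf.ncard]

lemma crossingNumber_eq_of_forall_le {k : ℕ} {D : Drawing G} (hfin : (crossingTriples D).Finite)
    (hD : (crossingTriples D).ncard ≤ 2 * k)
    (hle : ∀ D' : Drawing G, (crossingTriples D').Finite → 2 * k ≤ (crossingTriples D').ncard) :
    crossingNumber G = k := by
  refine le_antisymm (Nat.sInf_le ⟨D, hfin, hD⟩) (le_csInf ⟨k, D, hfin, hD⟩ ?_)
  rintro n ⟨D', hfin', hn⟩
  have := hle D' hfin'
  lia

lemma two_mul_crossingNumber_le {D : Drawing G} (hD : (crossingTriples D).Finite) :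
    2 * crossingNumber G ≤ (crossingTriples D).ncard := by
  obtain ⟨k, hk⟩ := even_ncard_crossingTriples D
  have : crossingNumber G ≤ k := Nat.sInf_le ⟨D, hD, by lia⟩
  lia

lemma exists_ncard_crossingTriples_le (hG : ∃ D : Drawing G, (crossingTriples D).Finite) :
    ∃ D : Drawing G, (crossingTriples D).Finite ∧
      (crossingTriples D).ncard ≤ 2 * crossingNumber G := by
  obtain ⟨D, hD⟩ := hG
  exact Nat.sInf_mem (s := {n | ∃ D : Drawing G, (crossingTriples D).Finite ∧
    (crossingTriples D).ncard ≤ 2 * n}) ⟨_, D, hD, Nat.le_mul_of_pos_left _ two_pos⟩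

lemma HasPerfectEliminationOrdering.comap (f : G ↪g H) (h : HasPerfectEliminationOrdering H) :
    HasPerfectEliminationOrdering G := by
  obtain ⟨o, ho⟩ := h
  refine ⟨LinearOrder.lift' f f.injective, fun v x hx y hy hxy => ?_⟩
  exact f.map_adj_iff.1 (ho (f v) ⟨f.map_adj_iff.2 hx.1, hx.2⟩ ⟨f.map_adj_iff.2 hy.1, hy.2⟩
    (f.injective.ne hxy))

lemma isMinor_of_hom {α : Type*} {K : SimpleGraph α} {f : G →g H} {B : α → Set V}
    (hf : ∀ a b, ∀ x ∈ B a, ∀ y ∈ B b, f x = f y → x = y) (hne : ∀ a, (B a).Nonempty)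
    (hconn : ∀ a, (G.induce (B a)).Connected) (hdisj : Pairwise fun a b => Disjoint (B a) (B b))
    (hadj : ∀ a b, K.Adj a b → ∃ u ∈ B a, ∃ v ∈ B b, G.Adj u v) : IsMinor K H := by
  refine ⟨fun a => f '' B a, fun a => (hne a).image f, fun a => ?_, fun a b hab => ?_,
    fun a b hab => ?_⟩
  · refine (hconn a).map (SimpleGraph.induceHom f (Set.mapsTo_image f (B a))) ?_
    rintro ⟨_, x, hx, rfl⟩
    exact ⟨⟨x, hx⟩, rfl⟩
  · refine Set.disjoint_left.2 ?_
    rintro _ ⟨x, hx, rfl⟩ ⟨y, hy, hyx⟩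
    exact Set.disjoint_left.1 (hdisj hab) hx (hf b a y hy x hx hyx ▸ hy)
  · obtain ⟨u, hu, v, hv, huv⟩ := hadj a b hab
    exact ⟨f u, ⟨u, hu, rfl⟩, f v, ⟨v, hv, rfl⟩, f.map_adj huv⟩

lemma IsMinor.map {α : Type*} {K : SimpleGraph α} (h : IsMinor K G) (f : G →g H)
    (hf : Function.Injective f) : IsMinor K H := by
  obtain ⟨B, hne, hconn, hdisj, hadj⟩ := h
  exact isMinor_of_hom (fun _ _ _ _ _ _ h => hf h) hne hconn hdisj hadj

end Drawings

/-! ### Disjoint copies -/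

section Copies

variable {V ι : Type*} {G : SimpleGraph V}

/-- The disjoint union of copies of `G` indexed by `ι`; the vertex `(i, v)` is the vertex `v` of
the `i`-th copy. -/
abbrev copies (ι : Type*) {V : Type*} (G : SimpleGraph V) : SimpleGraph (ι × V) :=
  (⊥ : SimpleGraph ι).boxProd G

lemma copies_adj {x y : ι × V} : (copies ι G).Adj x y ↔ x.1 = y.1 ∧ G.Adj x.2 y.2 := by
  simp [SimpleGraph.boxProd_adj, and_comm]

/-- The projection of the copies of `G` onto `G`. -/
def copiesProj (ι : Type*) {V : Type*} (G : SimpleGraph V) : copies ι G →g G where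
  toFun := Prod.snd
  map_rel' h := (copies_adj.1 h).2

lemma fst_eq_of_reachable {x y : ι × V} (h : (copies ι G).Reachable x y) : x.1 = y.1 :=
  SimpleGraph.reachable_bot.1 (SimpleGraph.reachable_boxProd.1 h).1

lemma hasPerfectEliminationOrdering_copies (h : HasPerfectEliminationOrdering G) :
    HasPerfectEliminationOrdering (copies ι G) := by
  classical
  obtain ⟨o, ho⟩ := h
  have : LinearOrder ι := linearOrderOfSTO WellOrderingRel
  refine ⟨LinearOrder.lift' (toLex : ι × V → ι ×ₗ V) toLex.injective, ?_⟩
  rintro ⟨i, v⟩ ⟨j, x⟩ ⟨hx, hxv⟩ ⟨k, y⟩ ⟨hy, hyv⟩ hxy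
  obtain ⟨rfl, hx⟩ := copies_adj.1 hx
  obtain ⟨rfl, hy⟩ := copies_adj.1 hy
  have hlt {z : V} (hz : toLex (i, z) < toLex (i, v)) : z < v := by
    simpa [Prod.Lex.toLex_lt_toLex] using hz
  exact copies_adj.2 ⟨rfl, ho v ⟨hx, hlt hxv⟩ ⟨hy, hlt hyv⟩ fun h => hxy (Prod.ext rfl h)⟩

lemma isMinor_of_isMinor_copies {α : Type*} {K : SimpleGraph α} (hK : K.Connected)
    (h : IsMinor K (copies ι G)) : IsMinor K G := by
  obtain ⟨B, hne, hconn, hdisj, hadj⟩ := h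
  have hbranch (a : α) {x y : ι × V} (hx : x ∈ B a) (hy : y ∈ B a) : x.1 = y.1 :=
    fst_eq_of_reachable (((hconn a).preconnected ⟨x, hx⟩ ⟨y, hy⟩).map
      (SimpleGraph.Embedding.induce (B a)).toHom)
  have hsame (a b : α) : ∀ x ∈ B a, ∀ y ∈ B b, x.1 = y.1 := by
    obtain ⟨w⟩ := hK.preconnected a b
    induction w with
    | nil => exact fun x hx y hy => hbranch _ hx hy
    | cons hac _ ih =>
      intro x hx y hy
      obtain ⟨u, hu, v, hv, huv⟩ := hadj _ _ hac
      exact (hbranch _ hx hu).trans ((copies_adj.1 huv).1.trans (ih v hv y hy))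
  exact isMinor_of_hom (f := copiesProj ι G)
    (fun a b x hx y hy h => Prod.ext (hsame a b x hx y hy) h) hne hconn hdisj hadj

lemma maxDegree_copies [Fintype ι] [Nonempty ι] [Fintype V] [DecidableRel G.Adj]
    [DecidableRel (copies ι G).Adj] : (copies ι G).maxDegree = G.maxDegree := by
  classical
  have hdeg (x : ι × V) [Fintype ((copies ι G).neighborSet x)] :
      (copies ι G).degree x = G.degree x.2 := by
    convert SimpleGraph.degree_boxProd (G := (⊥ : SimpleGraph ι)) (H := G) x
    simp
  refine le_antisymm ((copies ι G).maxDegree_le_of_forall_degree_le _ fun x => ?_)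
    (G.maxDegree_le_of_forall_degree_le _ fun v => ?_)
  · rw [hdeg]
    exact G.degree_le_maxDegree x.2
  · inhabit ι
    simpa only [hdeg] using (copies ι G).degree_le_maxDegree (default, v)

/-- The edge `x.2` of `G` in the copy `x.1`. -/
def copyEdge (x : ι × G.edgeSet) : (copies ι G).edgeSet :=
  (SimpleGraph.boxProdRight ⊥ G x.1).mapEdgeSet x.2

lemma mem_copyEdge {x : ι × G.edgeSet} {v : ι × V} :
    v ∈ (copyEdge x : Sym2 (ι × V)) ↔ v.1 = x.1 ∧ v.2 ∈ (x.2 : Sym2 V) := by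
  refine mem_mapEdgeSet_iff.trans ⟨?_, fun ⟨hi, hv⟩ => ⟨v.2, hv, Prod.ext hi.symm rfl⟩⟩
  rintro ⟨w, hw, rfl⟩
  exact ⟨rfl, hw⟩

lemma copyEdge_injective :
    Function.Injective (copyEdge : ι × G.edgeSet → (copies ι G).edgeSet) := by
  rintro ⟨i, e⟩ ⟨j, f⟩ h
  have hij : i = j := by
    have hmem : (i, (e : Sym2 V).out.1) ∈ (copyEdge (i, e) : Sym2 (ι × V)) :=
      mem_copyEdge.2 ⟨rfl, Sym2.out_fst_mem _⟩
    exact (mem_copyEdge.1 (h ▸ hmem)).1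
  subst hij
  exact congrArg (Prod.mk i) ((SimpleGraph.boxProdRight ⊥ G i).mapEdgeSet.injective h)

lemma copyEdge_surjective :
    Function.Surjective (copyEdge : ι × G.edgeSet → (copies ι G).edgeSet) := by
  rintro ⟨e, he⟩
  induction e using Sym2.ind with
  | _ x y =>
    obtain ⟨hfst, hadj⟩ := copies_adj.1 he
    exact ⟨(x.1, ⟨s(x.2, y.2), hadj⟩), Subtype.ext (congrArg (s(x, ·)) (Prod.ext hfst rfl))⟩

/-- The edges of the copies of `G` are the edges of `G` labelled with the copy they lie in. -/
noncomputable def copyEdgeEquiv : ι × G.edgeSet ≃ (copies ι G).edgeSet :=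
  Equiv.ofBijective copyEdge ⟨copyEdge_injective, copyEdge_surjective⟩

/-- The drawing of the copies of `G` that places the copy `i` by the map `φ (i, ·)`. -/
noncomputable def Drawing.placeCopies (D : Drawing G) (φ : ι × (ℝ × ℝ) → ℝ × ℝ)
    (hφ : Function.Injective φ) (hcont : ∀ i, Continuous fun p => φ (i, p)) :
    Drawing (copies ι G) where
  pos := φ ∘ Prod.map id D.pos
  pos_inj := hφ.comp (Function.injective_id.prodMap D.pos_inj)
  arc e t := φ ((copyEdgeEquiv.symm e).1, D.arc (copyEdgeEquiv.symm e).2 t)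
  arc_cont e := (hcont _).comp (D.arc_cont _)
  arc_inj e _ _ h := D.arc_inj _ (Prod.mk.inj (hφ h)).2
  arc_ends := by
    rw [copyEdgeEquiv.surjective.forall]
    rintro ⟨i, e⟩ ⟨j, v⟩ ⟨k, w⟩ h
    have hv : j = i ∧ v ∈ (e : Sym2 V) := mem_copyEdge.1 (h ▸ Sym2.mem_mk_left _ _)
    have hw : k = i ∧ w ∈ (e : Sym2 V) := mem_copyEdge.1 (h ▸ Sym2.mem_mk_right _ _)
    obtain ⟨rfl, hv⟩ := hv
    obtain ⟨rfl, hw⟩ := hw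
    have hvw : v ≠ w := by
      rintro rfl
      exact (copies ι G).not_isDiag_of_mem_edgeSet (copyEdgeEquiv (k, e)).2 (h ▸ rfl)
    simp only [Equiv.symm_apply_apply]
    exact (D.arc_ends e v w ((Sym2.mem_and_mem_iff hvw).1 ⟨hv, hw⟩)).imp
      (And.imp (congrArg fun p => φ (_, p)) (congrArg fun p => φ (_, p)))
      (And.imp (congrArg fun p => φ (_, p)) (congrArg fun p => φ (_, p)))
  arc_avoid := by
    rw [copyEdgeEquiv.surjective.forall]
    rintro ⟨i, e⟩ ⟨j, v⟩ t h
    rw [Equiv.symm_apply_apply] at h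
    obtain ⟨hij, hv⟩ := Prod.mk.inj (hφ h)
    exact mem_copyEdge.2 ⟨hij.symm, D.arc_avoid e v t hv⟩

lemma Drawing.crossingTriples_placeCopies_subset (D : Drawing G) (φ : ι × (ℝ × ℝ) → ℝ × ℝ)
    (hφ : Function.Injective φ) (hcont : ∀ i, Continuous fun p => φ (i, p)) :
    crossingTriples (D.placeCopies φ hφ hcont) ⊆
      (fun x => (φ (x.1, x.2.1), copyEdge (x.1, x.2.2.1), copyEdge (x.1, x.2.2.2))) ''
        (Set.univ ×ˢ crossingTriples D) := by
  rintro ⟨_, e, f⟩ ⟨hne, ⟨s, hs⟩, ⟨t, ht⟩, hends⟩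
  dsimp only at hs
  subst hs
  obtain ⟨⟨i, e⟩, rfl⟩ := copyEdgeEquiv.surjective e
  obtain ⟨⟨j, f⟩, rfl⟩ := copyEdgeEquiv.surjective f
  simp only [Drawing.placeCopies, Equiv.symm_apply_apply] at ht hends ⊢
  obtain ⟨rfl, hst⟩ := Prod.mk.inj (hφ ht)
  refine ⟨(j, D.arc e s, e, f), ⟨trivial, ?_, ⟨s, rfl⟩, ⟨t, hst⟩, ?_⟩, rfl⟩
  · exact fun hef => hne (congrArg (fun e => copyEdgeEquiv (j, e)) hef)
  · rintro ⟨v, hve, hvf, hv⟩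
    exact hends ⟨(j, v), mem_copyEdge.2 ⟨rfl, hve⟩, mem_copyEdge.2 ⟨rfl, hvf⟩,
      congrArg (fun p => φ (j, p)) hv⟩

lemma exists_injective_continuous_plane (ι : Type*) [Countable ι] :
    ∃ φ : ι × (ℝ × ℝ) → ℝ × ℝ, Function.Injective φ ∧ ∀ i, Continuous fun p => φ (i, p) := by
  obtain ⟨k, hk⟩ := exists_injective_nat ι
  refine ⟨fun x => (k x.1 * Real.pi + Real.arctan x.2.1, x.2.2), ?_, fun i => by fun_prop⟩
  rintro ⟨i, a, b⟩ ⟨j, c, d⟩ h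
  obtain ⟨hfst, rfl⟩ : k i * Real.pi + Real.arctan a = k j * Real.pi + Real.arctan c ∧ b = d := by
    simpa using h
  have ha := Real.arctan_mem_Ioo a
  have hc := Real.arctan_mem_Ioo c
  have hlt {m n : ℕ} (h : (m : ℝ) * Real.pi < (n + 1) * Real.pi) : m ≤ n := by
    have := lt_of_mul_lt_mul_right h Real.pi_pos.le
    norm_cast at this
    lia
  have hij : k i = k j := le_antisymm
    (hlt (by linarith [ha.1, hc.2])) (hlt (by linarith [ha.2, hc.1]))
  obtain rfl := hk hij
  simpa using Real.arctan_injective (add_left_cancel hfst)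

lemma card_mul_crossingNumber_le [Fintype ι] {D : Drawing (copies ι G)}
    (hD : (crossingTriples D).Finite) :
    2 * (Fintype.card ι * crossingNumber G) ≤ (crossingTriples D).ncard := by
  let f (i : ι) : G →g copies ι G := (SimpleGraph.boxProdRight ⊥ G i).toHom
  have hf (i : ι) : Function.Injective (f i) := (SimpleGraph.boxProdRight ⊥ G i).injective
  have hfin (i : ι) := Drawing.finite_crossingTriples_comap hD (f i) (hf i)
  let S := univ.sigma fun i => (hfin i).toFinset
  calc 2 * (Fintype.card ι * crossingNumber G) = ∑ _i : ι, 2 * crossingNumber G := by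
        simp [mul_left_comm]
    _ ≤ ∑ i, (crossingTriples (D.comap (f i) (hf i))).ncard :=
        sum_le_sum fun i _ => two_mul_crossingNumber_le (hfin i)
    _ = #S := by simp only [S, card_sigma, Set.ncard_eq_toFinset_card _ (hfin _)]
    _ ≤ #hD.toFinset := card_le_card_of_injOn
        (fun x => (x.2.1, copyEdge (x.1, x.2.2.1), copyEdge (x.1, x.2.2.2))) ?_ ?_
    _ = (crossingTriples D).ncard := (Set.ncard_eq_toFinset_card _ hD).symm
  · rintro ⟨i, q⟩ hq
    simp only [S, coe_sigma, Set.mem_sigma_iff, mem_coe, Set.Finite.mem_toFinset] at hq ⊢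
    exact D.mapsTo_crossingTriples_comap (f i) (hf i) hq.2
  · rintro ⟨i, p, e, e'⟩ - ⟨j, q, g, g'⟩ - h
    obtain ⟨rfl, he, he'⟩ := by simpa using h
    obtain ⟨rfl, rfl⟩ := Prod.mk.inj (copyEdge_injective he)
    obtain ⟨-, rfl⟩ := Prod.mk.inj (copyEdge_injective he')
    rfl

theorem crossingNumber_copies [Fintype ι] (hG : ∃ D : Drawing G, (crossingTriples D).Finite) :
    crossingNumber (copies ι G) = Fintype.card ι * crossingNumber G := by
  obtain ⟨D, hfin, hD⟩ := exists_ncard_crossingTriples_le hG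
  obtain ⟨φ, hφ, hcont⟩ := exists_injective_continuous_plane ι
  have hsub := D.crossingTriples_placeCopies_subset φ hφ hcont
  have hprod : (Set.univ ×ˢ crossingTriples D : Set (ι × _)).Finite := Set.finite_univ.prod hfin
  refine crossingNumber_eq_of_forall_le ((hprod.image _).subset hsub) ?_
    fun _ => card_mul_crossingNumber_le
  calc (crossingTriples (D.placeCopies φ hφ hcont)).ncard
      ≤ (Set.univ ×ˢ crossingTriples D : Set (ι × _)).ncard :=
        (Set.ncard_le_ncard hsub (hprod.image _)).trans (Set.ncard_image_le hprod)
    _ = Fintype.card ι * (crossingTriples D).ncard := by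
        rw [Set.ncard_prod, Set.ncard_univ, Nat.card_eq_fintype_card]
    _ ≤ 2 * (Fintype.card ι * crossingNumber G) := by
        rw [mul_left_comm]
        exact Nat.mul_le_mul_left _ hD

end Copies

/-! ### Thickened graphs -/

section Thickening

variable {α ρ : Type*} {H : SimpleGraph α}

/-- The graph obtained from `H` by adding, for each edge `e` and each `j : ρ`, a new vertex
`Sum.inr (e, j)` adjacent to both endpoints of `e`. -/
def thickening (H : SimpleGraph α) (ρ : Type*) : SimpleGraph (α ⊕ H.edgeSet × ρ) where
  Adj
    | .inl a, .inl b => H.Adj a b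
    | .inl a, .inr x => a ∈ (x.1 : Sym2 α)
    | .inr x, .inl a => a ∈ (x.1 : Sym2 α)
    | .inr _, .inr _ => False
  symm := ⟨by
    rintro (a | x) (b | y) h
    exacts [H.adj_symm h, h, h, h]⟩
  loopless := ⟨by
    rintro (a | x) h
    exacts [H.irrefl h, h]⟩

lemma adj_of_mem_edge {e : H.edgeSet} {a b : α} (ha : a ∈ (e : Sym2 α)) (hb : b ∈ (e : Sym2 α))
    (hab : a ≠ b) : H.Adj a b := by
  have he : (e : Sym2 α) = s(a, b) := (Sym2.mem_and_mem_iff hab).1 ⟨ha, hb⟩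
  exact H.mem_edgeSet.1 (he ▸ e.2)

lemma hasPerfectEliminationOrdering_thickening (h : HasPerfectEliminationOrdering H) :
    HasPerfectEliminationOrdering (thickening H ρ) := by
  classical
  obtain ⟨o, ho⟩ := h
  have : LinearOrder (H.edgeSet × ρ) := linearOrderOfSTO WellOrderingRel
  refine ⟨LinearOrder.lift' (toLex : α ⊕ H.edgeSet × ρ → α ⊕ₗ H.edgeSet × ρ) toLex.injective, ?_⟩
  rintro (v | v) (x | x) ⟨hx, hxv⟩ (y | y) ⟨hy, hyv⟩ hxy
  · exact ho v ⟨hx, Sum.Lex.inl_lt_inl_iff.1 hxv⟩ ⟨hy, Sum.Lex.inl_lt_inl_iff.1 hyv⟩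
      fun h => hxy (congrArg _ h)
  · exact absurd hyv Sum.Lex.not_inr_lt_inl
  · exact absurd hxv Sum.Lex.not_inr_lt_inl
  · exact absurd hxv Sum.Lex.not_inr_lt_inl
  · exact adj_of_mem_edge (e := v.1) hx hy fun h => hxy (congrArg _ h)
  · exact hy.elim
  · exact hx.elim
  · exact hx.elim

lemma hasPerfectEliminationOrdering_top [LinearOrder α] :
    HasPerfectEliminationOrdering (⊤ : SimpleGraph α) :=
  ⟨inferInstance, fun _ _ _ _ _ h => h⟩

lemma exists_eq_singleton_inr {S : Set (α ⊕ H.edgeSet × ρ)} (hS : ∀ v, .inl v ∉ S)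
    (hconn : ((thickening H ρ).induce S).Connected) : ∃ x, S = {.inr x} := by
  have hbot : (thickening H ρ).induce S = ⊥ := by
    ext ⟨u | u, hu⟩ ⟨v | v, hv⟩
    exacts [(hS u hu).elim, (hS u hu).elim, (hS v hv).elim, Iff.rfl]
  obtain ⟨⟨v | x, hx⟩⟩ := hconn.nonempty
  · exact (hS v hx).elim
  refine ⟨x, Set.eq_singleton_iff_unique_mem.2 ⟨hx, fun y hy => ?_⟩⟩
  have hreach := hconn.preconnected ⟨y, hy⟩ ⟨_, hx⟩
  rw [hbot, SimpleGraph.reachable_bot] at hreach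
  exact congrArg Subtype.val hreach

-- A branch set avoiding `α` is a single new vertex, which has just two neighbours.
lemma card_le_of_isMinor_thickening {κ : Type*} [Fintype κ] [Fintype α] {K : SimpleGraph κ}
    [DecidableRel K.Adj] (hdeg : ∀ a, 3 ≤ K.degree a) (h : IsMinor K (thickening H ρ)) :
    Fintype.card κ ≤ Fintype.card α := by
  classical
  obtain ⟨B, -, hconn, hdisj, hadj⟩ := h
  have heq {a b : κ} {u} (ha : u ∈ B a) (hb : u ∈ B b) : a = b :=
    by_contra fun hne => Set.disjoint_left.1 (hdisj hne) ha hb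
  have hinl (a : κ) : ∃ v, Sum.inl v ∈ B a := by
    by_contra! hB
    obtain ⟨x, hx⟩ := exists_eq_singleton_inr hB (hconn a)
    have hends : ∀ b ∈ K.neighborFinset a, ∃ v ∈ (x.1 : Sym2 α).toFinset, .inl v ∈ B b := by
      intro b hb
      obtain ⟨u, hu, v | v, hv, huv⟩ := hadj a b ((K.mem_neighborFinset a b).1 hb) <;>
        obtain rfl : u = .inr x := by simpa [hx] using hu
      exacts [⟨v, Sym2.mem_toFinset.2 huv, hv⟩, huv.elim]
    have : Nonempty α := ⟨(x.1 : Sym2 α).out.1⟩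
    choose! f hf hfB using hends
    have hle : K.degree a ≤ #(x.1 : Sym2 α).toFinset :=
      card_le_card_of_injOn f hf fun b hb c hc hbc => heq (hfB b hb) (hbc ▸ hfB c hc)
    rw [Sym2.card_toFinset_of_not_isDiag _ (H.not_isDiag_of_mem_edgeSet x.1.2)] at hle
    exact absurd ((hdeg a).trans hle) (by decide)
  choose f hf using hinl
  exact Fintype.card_le_of_injective f fun a b hab => heq (hf a) (hab ▸ hf b)

section Degree

variable [Fintype α] [Fintype ρ] [DecidableRel H.Adj] [DecidableRel (thickening H ρ).Adj]

lemma degree_thickening_inl (a : α) :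
    (thickening H ρ).degree (.inl a) = H.degree a * (Fintype.card ρ + 1) := by
  classical
  have hinc : #{e : H.edgeSet | a ∈ (e : Sym2 α)} = H.degree a := by
    rw [← H.card_incidenceFinset_eq_degree, ← card_map (Function.Embedding.subtype _)]
    congr 1
    ext e
    simp [SimpleGraph.incidenceSet, and_comm]
  have hnbr : (thickening H ρ).neighborFinset (.inl a) =
      (H.neighborFinset a).disjSum (({e : H.edgeSet | a ∈ (e : Sym2 α)} : Finset _) ×ˢ univ) := by
    ext (b | x) <;> rw [SimpleGraph.mem_neighborFinset] <;> simp [thickening]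
  rw [← SimpleGraph.card_neighborFinset_eq_degree, hnbr, card_disjSum, card_product, hinc,
    H.card_neighborFinset_eq_degree, card_univ]
  ring

lemma degree_thickening_inr (x : H.edgeSet × ρ) : (thickening H ρ).degree (.inr x) = 2 := by
  classical
  have hnbr : (thickening H ρ).neighborFinset (.inr x) =
      (x.1 : Sym2 α).toFinset.map Function.Embedding.inl := by
    ext (b | y) <;> rw [SimpleGraph.mem_neighborFinset] <;> simp [thickening]
  rw [← SimpleGraph.card_neighborFinset_eq_degree, hnbr, card_map,
    Sym2.card_toFinset_of_not_isDiag _ (H.not_isDiag_of_mem_edgeSet x.1.2)]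

lemma maxDegree_thickening :
    (thickening H ρ).maxDegree = H.maxDegree * (Fintype.card ρ + 1) := by
  refine le_antisymm ((thickening H ρ).maxDegree_le_of_forall_degree_le _ ?_) ?_
  · rintro (a | ⟨⟨e, he⟩, j⟩)
    · rw [degree_thickening_inl]
      exact Nat.mul_le_mul_right _ (H.degree_le_maxDegree a)
    · have hH : 0 < H.maxDegree := Nat.pos_of_ne_zero fun h => by
        rw [H.maxDegree_eq_zero_iff.1 h, SimpleGraph.edgeSet_bot] at he
        exact he
      have hρ : 0 < Fintype.card ρ := Fintype.card_pos_iff.2 ⟨j⟩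
      rw [degree_thickening_inr]
      nlinarith
  · cases isEmpty_or_nonempty α
    · simp [SimpleGraph.maxDegree_of_subsingleton]
    · obtain ⟨a, ha⟩ := H.exists_maximal_degree_vertex
      rw [ha, ← degree_thickening_inl]
      exact (thickening H ρ).degree_le_maxDegree _

end Degree

end Thickening

section Strands

variable {α ρ V : Type*} {H : SimpleGraph α}

/-- The edges of the thickening that lie on one of the `card ρ + 1` strands joining the endpoints
of `e`: the original edge `e` for `none`, the two edges through the new vertex `(e, j)` for
`some j`. -/
def strand : H.edgeSet × Option ρ → Set (Sym2 (α ⊕ H.edgeSet × ρ))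
  | (e, none) => {(e : Sym2 α).map .inl}
  | (e, some j) => {g | ∃ a ∈ (e : Sym2 α), g = s(.inl a, .inr (e, j))}

lemma mem_of_inl_mem {x : H.edgeSet × Option ρ} {g : Sym2 (α ⊕ H.edgeSet × ρ)}
    (hg : g ∈ strand x) {a : α} (ha : .inl a ∈ g) : a ∈ (x.1 : Sym2 α) := by
  obtain ⟨e, _ | j⟩ := x
  · obtain rfl := hg
    simpa using ha
  · obtain ⟨b, hb, rfl⟩ := hg
    obtain rfl : a = b := by simpa using ha
    exact hb

lemma inr_mem_iff {x : H.edgeSet × Option ρ} {g : Sym2 (α ⊕ H.edgeSet × ρ)}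
    (hg : g ∈ strand x) {e : H.edgeSet} {j : ρ} : .inr (e, j) ∈ g ↔ x = (e, some j) := by
  obtain ⟨e', _ | j'⟩ := x
  · obtain rfl := hg
    simp
  · obtain ⟨b, _, rfl⟩ := hg
    simp [eq_comm]

lemma exists_mem_strand (g : (thickening H ρ).edgeSet) :
    ∃ x : H.edgeSet × Option ρ, (g : Sym2 (α ⊕ H.edgeSet × ρ)) ∈ strand x := by
  obtain ⟨g, hg⟩ := g
  induction g with | _ u v
  rcases u with a | x <;> rcases v with b | y
  · exact ⟨(⟨s(a, b), hg⟩, none), rfl⟩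
  · exact ⟨(y.1, some y.2), a, hg, rfl⟩
  · exact ⟨(x.1, some x.2), b, hg, Sym2.eq_swap⟩
  · exact False.elim hg

/-- The strand on which an edge of the thickening lies. -/
noncomputable def strandOf (g : (thickening H ρ).edgeSet) : H.edgeSet × Option ρ :=
  (exists_mem_strand g).choose

lemma mem_strand_strandOf (g : (thickening H ρ).edgeSet) :
    (g : Sym2 (α ⊕ H.edgeSet × ρ)) ∈ strand (strandOf g) :=
  (exists_mem_strand g).choose_spec

lemma strandOf_eq {g : (thickening H ρ).edgeSet} {x : H.edgeSet × Option ρ}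
    (hx : (g : Sym2 (α ⊕ H.edgeSet × ρ)) ∈ strand x) : strandOf g = x := by
  have hg := mem_strand_strandOf g
  generalize strandOf g = y at hg
  obtain ⟨e, _ | j⟩ := x
  · obtain ⟨e', _ | j⟩ := y
    · have heq : (e' : Sym2 α).map (Sum.inl (β := H.edgeSet × ρ)) = (e : Sym2 α).map Sum.inl :=
        hg.symm.trans hx
      rw [Subtype.ext (Sym2.map.injective Sum.inl_injective heq)]
    · simpa using (inr_mem_iff hx).1 ((inr_mem_iff hg).2 rfl)
  · exact (inr_mem_iff hg).1 ((inr_mem_iff hx).2 rfl)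

lemma Drawing.exists_path {G : SimpleGraph V} (D : Drawing G) {u v : V} (h : G.Adj u v) :
    ∃ γ : Path (D.pos u) (D.pos v), ∀ t, γ t ∈ Set.range (D.arc ⟨s(u, v), h⟩) := by
  rcases D.arc_ends ⟨s(u, v), h⟩ u v rfl with ⟨h0, h1⟩ | ⟨h0, h1⟩
  · exact ⟨⟨⟨_, D.arc_cont _⟩, h0, h1⟩, fun t => ⟨t, rfl⟩⟩
  · exact ⟨Path.symm ⟨⟨_, D.arc_cont _⟩, h0, h1⟩, fun t => ⟨_, rfl⟩⟩

lemma Drawing.exists_path_strand (D : Drawing (thickening H ρ)) {a b : α} (h : H.Adj a b)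
    (s : Option ρ) : ∃ γ : Path (D.pos (.inl a)) (D.pos (.inl b)), ∀ t, ∃ g,
      strandOf g = (⟨s(a, b), h⟩, s) ∧ γ t ∈ Set.range (D.arc g) := by
  rcases s with _ | j
  · obtain ⟨γ, hγ⟩ := D.exists_path (u := .inl a) (v := .inl b) h
    exact ⟨γ, fun t => ⟨_, strandOf_eq (Set.mem_singleton _), hγ t⟩⟩
  · obtain ⟨γ, hγ⟩ := D.exists_path (u := .inl a) (v := .inr (⟨s(a, b), h⟩, j))
      (Sym2.mem_mk_left a b)
    obtain ⟨δ, hδ⟩ := D.exists_path (u := .inr (⟨s(a, b), h⟩, j)) (v := .inl b)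
      (Sym2.mem_mk_right a b)
    refine ⟨γ.trans δ, fun t => ?_⟩
    rcases Path.trans_range γ δ ▸ Set.mem_range_self t with ⟨t, ht⟩ | ⟨t, ht⟩
    · exact ⟨_, strandOf_eq ⟨a, Sym2.mem_mk_left a b, rfl⟩, ht ▸ hγ t⟩
    · exact ⟨_, strandOf_eq ⟨b, Sym2.mem_mk_right a b, Sym2.eq_swap⟩, ht ▸ hδ t⟩

lemma exists_mem_crossingTriples_of_strand_choice (hH : IndependentEdgesMeet H)
    (D : Drawing (thickening H ρ)) (σ : H.edgeSet → Option ρ) :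
    ∃ p g g', (p, g, g') ∈ crossingTriples D ∧ (strandOf g).1 ≠ (strandOf g').1 ∧
      σ (strandOf g).1 = (strandOf g).2 ∧ σ (strandOf g').1 = (strandOf g').2 := by
  choose γ hγ using fun a b (h : H.Adj a b) => D.exists_path_strand h (σ ⟨s(a, b), h⟩)
  obtain ⟨a, b, c, d, hab, hcd, hnodup, s, t, hst⟩ := hH _ γ
  obtain ⟨g, hg, hsg⟩ := hγ a b hab s
  obtain ⟨g', hg', htg'⟩ := hγ c d hcd t
  have hdisj (x : α) (hx : x ∈ s(a, b)) (hx' : x ∈ s(c, d)) : False := by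
    rcases Sym2.mem_iff.1 hx with rfl | rfl <;> rcases Sym2.mem_iff.1 hx' with rfl | rfl <;>
      simp at hnodup
  have hne : (⟨s(a, b), hab⟩ : H.edgeSet) ≠ ⟨s(c, d), hcd⟩ := fun h =>
    hdisj a (Sym2.mem_mk_left a b) (Subtype.mk.inj h ▸ Sym2.mem_mk_left a b)
  have hmem := mem_strand_strandOf g
  have hmem' := mem_strand_strandOf g'
  rw [hg] at hmem
  rw [hg'] at hmem'
  refine ⟨_, g, g', ⟨?_, hsg, hst ▸ htg', ?_⟩, ?_, ?_, ?_⟩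
  · rintro (rfl : g = g')
    exact hne (congrArg Prod.fst (hg.symm.trans hg'))
  · rintro ⟨x | ⟨e, j⟩, hx, hx', -⟩
    · exact hdisj x (mem_of_inl_mem hmem hx) (mem_of_inl_mem hmem' hx')
    · exact hne (congrArg Prod.fst
        (((inr_mem_iff hmem).1 hx).trans ((inr_mem_iff hmem').1 hx').symm))
  all_goals simp only [hg, hg', ne_eq, hne, not_false_eq_true]

lemma card_filter_apply_eq_and_apply_eq {ι S : Type*} [Fintype ι] [DecidableEq ι] [Fintype S]
    [DecidableEq S] {i j : ι} (hij : i ≠ j) (x y : S) :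
    #{σ : ι → S | σ i = x ∧ σ j = y} = Fintype.card S ^ (Fintype.card ι - 2) := by
  have hpi : ({σ : ι → S | σ i = x ∧ σ j = y} : Finset _) =
      Fintype.piFinset fun k => if k = i then {x} else if k = j then {y} else univ := by
    ext σ
    simp only [mem_filter, mem_univ, true_and, Fintype.mem_piFinset]
    refine ⟨?_, fun h => ⟨by simpa using h i, by simpa [hij.symm] using h j⟩⟩
    rintro ⟨rfl, rfl⟩ k
    split_ifs with hi hj <;> simp [*]
  have hcard (k : ι) : #(if k = i then {x} else if k = j then {y} else univ : Finset S) =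
      if k ∈ ({i, j} : Finset ι) then 1 else Fintype.card S := by
    by_cases hi : k = i <;> by_cases hj : k = j <;> simp [hi, hj, hij.symm]
  rw [hpi, Fintype.card_piFinset, prod_congr rfl fun k _ => hcard k, prod_ite, prod_const_one,
    one_mul, prod_const, filter_notMem_eq_sdiff, ← compl_eq_univ_sdiff, card_compl, card_pair hij]

-- Double counting of pairs (choice of a strand for each edge of `H`, crossing of chosen strands).
theorem two_mul_sq_le_ncard_crossingTriples [Finite H.edgeSet] [Fintype ρ]
    (hH : IndependentEdgesMeet H) {D : Drawing (thickening H ρ)} (hD : (crossingTriples D).Finite) :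
    2 * (Fintype.card ρ + 1) ^ 2 ≤ (crossingTriples D).ncard := by
  classical
  have := Fintype.ofFinite H.edgeSet
  let r (σ : H.edgeSet → Option ρ) (q : (ℝ × ℝ) × (thickening H ρ).edgeSet ×
      (thickening H ρ).edgeSet) : Prop := (strandOf q.2.1).1 ≠ (strandOf q.2.2).1 ∧
    σ (strandOf q.2.1).1 = (strandOf q.2.1).2 ∧ σ (strandOf q.2.2).1 = (strandOf q.2.2).2
  set N := Fintype.card (Option ρ) with hN
  have hmany (σ : H.edgeSet → Option ρ) : 2 ≤ #(hD.toFinset.bipartiteAbove r σ) := by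
    obtain ⟨p, g, g', hmem, hσ⟩ := exists_mem_crossingTriples_of_strand_choice hH D σ
    rw [← card_pair (a := (p, g, g')) (b := (p, g', g)) (by simp [hmem.1])]
    refine card_le_card fun q hq => ?_
    rw [mem_bipartiteAbove, hD.mem_toFinset]
    rcases mem_insert.1 hq with rfl | hq
    · exact ⟨hmem, hσ⟩
    · obtain rfl := mem_singleton.1 hq
      exact ⟨swap_mem_crossingTriples hmem, hσ.1.symm, hσ.2.symm⟩
  have hfew (q) : #((univ : Finset (H.edgeSet → Option ρ)).bipartiteBelow r q) ≤
      N ^ (Fintype.card H.edgeSet - 2) := by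
    by_cases hq : (strandOf q.2.1).1 = (strandOf q.2.2).1
    · simp [bipartiteBelow, r, hq]
    · rw [← card_filter_apply_eq_and_apply_eq hq (strandOf q.2.1).2 (strandOf q.2.2).2]
      exact card_le_card fun σ hσ => by simpa using ((mem_bipartiteBelow _).1 hσ).2.2
  have hcount := card_mul_le_card_mul r (fun σ _ => hmany σ) fun q _ => hfew q
  obtain ⟨-, g, g', -, hne, -⟩ := exists_mem_crossingTriples_of_strand_choice hH D fun _ => none
  have htwo : 2 ≤ Fintype.card H.edgeSet := Fintype.one_lt_card_iff.2 ⟨_, _, hne⟩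
  have hpos : 0 < N ^ (Fintype.card H.edgeSet - 2) := Nat.pow_pos Fintype.card_pos
  rw [← Set.ncard_eq_toFinset_card _ hD, card_univ, Fintype.card_fun, ← hN,
    ← Nat.sub_add_cancel htwo, pow_add, Nat.sub_add_cancel htwo] at hcount
  rw [← Fintype.card_option, ← hN]
  exact Nat.le_of_mul_le_mul_right (by linarith) hpos

end Strands

/-! ### Drawings in a book with two pages -/

section MonotoneDrawing

variable {V : Type*} {G : SimpleGraph V} {p : V → ℝ × ℝ}

lemma exists_le_lineMap_out (p : V → ℝ × ℝ) (e : Sym2 V) {t : ℝ} (ht : t ∈ Set.Icc 0 1) :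
    ∃ u ∈ e, ∃ v ∈ e, AffineMap.lineMap (p e.out.1).1 (p e.out.2).1 t ∈
      Set.Icc (p u).1 (p v).1 := by
  have hmem : AffineMap.lineMap (p e.out.1).1 (p e.out.2).1 t ∈
      Set.uIcc (p e.out.1).1 (p e.out.2).1 :=
    segment_eq_uIcc (p e.out.1).1 _ ▸ segment_eq_image_lineMap ℝ (p e.out.1).1 _ ▸ ⟨t, ht, rfl⟩
  rcases Set.mem_uIcc.1 hmem with h | h
  exacts [⟨_, e.out_fst_mem, _, e.out_snd_mem, h⟩, ⟨_, e.out_snd_mem, _, e.out_fst_mem, h⟩]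

/-- A drawing with vertices at the points `p v` in which every edge `e` is drawn along the graph
of a continuous function `φ e`. -/
noncomputable def monotoneDrawing (p : V → ℝ × ℝ) (hp : Function.Injective p)
    (φ : G.edgeSet → ℝ → ℝ) (hφ : ∀ e, Continuous (φ e))
    (hfst : ∀ u v, G.Adj u v → (p u).1 ≠ (p v).1)
    (hends : ∀ e : G.edgeSet, ∀ v ∈ (e : Sym2 V), φ e (p v).1 = (p v).2)
    (havoid : ∀ e : G.edgeSet, ∀ u ∈ (e : Sym2 V), ∀ v ∈ (e : Sym2 V), ∀ w,
      (p w).1 ∈ Set.Icc (p u).1 (p v).1 → φ e (p w).1 = (p w).2 → w ∈ (e : Sym2 V)) :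
    Drawing G where
  pos := p
  pos_inj := hp
  arc e t :=
    let X := AffineMap.lineMap (p (e : Sym2 V).out.1).1 (p (e : Sym2 V).out.2).1 (t : ℝ)
    (X, φ e X)
  arc_cont e := by
    have := hφ e
    fun_prop
  arc_inj e t t' h := by
    have he : s((e : Sym2 V).out.1, (e : Sym2 V).out.2) = e := Quot.out_eq _
    have hadj : G.Adj (e : Sym2 V).out.1 (e : Sym2 V).out.2 := by
      rw [← SimpleGraph.mem_edgeSet, he]
      exact e.2
    exact Subtype.ext (AffineMap.lineMap_injective ℝ (hfst _ _ hadj) (congrArg Prod.fst h))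
  arc_ends e v w h := by
    have hv := hends e _ (e : Sym2 V).out_fst_mem
    have hw := hends e _ (e : Sym2 V).out_snd_mem
    have he : s((e : Sym2 V).out.1, (e : Sym2 V).out.2) = s(v, w) := (Quot.out_eq _).trans h
    rcases Sym2.eq_iff.1 he with ⟨rfl, rfl⟩ | ⟨rfl, rfl⟩
    · exact .inl ⟨by simp [hv], by simp [hw]⟩
    · exact .inr ⟨by simp [hv], by simp [hw]⟩
  arc_avoid e w t h := by
    obtain ⟨u, hu, v, hv, huv⟩ := exists_le_lineMap_out p e t.2
    rw [Prod.ext_iff] at h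
    obtain ⟨h1, h2⟩ := h
    dsimp only at h1 h2
    exact havoid e u hu v hv w (h1 ▸ huv) (h1 ▸ h2)

lemma exists_of_mem_range_arc_monotoneDrawing {hp : Function.Injective p}
    {φ : G.edgeSet → ℝ → ℝ} {hφ hfst hends havoid} {e : G.edgeSet} {q : ℝ × ℝ}
    (hq : q ∈ Set.range ((monotoneDrawing p hp φ hφ hfst hends havoid).arc e)) :
    φ e q.1 = q.2 ∧ ∃ u ∈ (e : Sym2 V), ∃ v ∈ (e : Sym2 V), q.1 ∈ Set.Icc (p u).1 (p v).1 := by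
  obtain ⟨t, rfl⟩ := hq
  exact ⟨rfl, exists_le_lineMap_out p e t.2⟩

end MonotoneDrawing

section Arches

variable {a b a' b' h h' X Y : ℝ}

lemma arch_eq_zero_of_nested (ha : a ≤ a') (hb : b' ≤ b) (hX : X ∈ Set.Icc a' b') (h0 : 0 ≤ h')
    (hh : h' < h) (heq : h * ((X - a) * (b - X)) = h' * ((X - a') * (b' - X))) :
    (X - a) * (b - X) = 0 ∧ (X - a') * (b' - X) = 0 := by
  obtain ⟨hX1, hX2⟩ := hX
  have hnonneg : 0 ≤ (X - a') * (b' - X) := mul_nonneg (by linarith) (by linarith)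
  have hle : (X - a') * (b' - X) ≤ (X - a) * (b - X) := by gcongr; linarith
  constructor <;> nlinarith

lemma mem_Ioo_of_arch_eq_arch {n δ : ℝ} (ha : a + 1 ≤ a') (hab : a' + 1 ≤ b) (hb : b < b')
    (hn : b' - a' ≤ n) (hh : 2 ≤ h) (h0 : 0 < h') (hh' : h' ≤ n) (hδn : n ^ 2 * δ < 1)
    (hδ : 2 * δ ≤ 1) (hX : X ∈ Set.Icc a' b)
    (heq : h * ((X - a) * (b - X)) = h' * ((X - a') * (b' - X))) : X ∈ Set.Ioo (a' + δ) b := by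
  obtain ⟨hX1, hX2⟩ := hX
  have hn0 : 0 ≤ n := h0.le.trans hh'
  constructor
  · by_contra! hXδ
    have hδ0 : 0 ≤ δ := by linarith
    have hlower : 2 * (1 * (1 / 2)) ≤ h * ((X - a) * (b - X)) := by gcongr <;> linarith
    have hupper : h' * ((X - a') * (b' - X)) ≤ n * (δ * n) := by
      apply_rules [mul_le_mul, mul_nonneg] <;> linarith
    linarith
  · refine hX2.lt_of_ne ?_
    rintro rfl
    have : 0 < h' * ((X - a') * (b' - X)) := by apply_rules [mul_pos] <;> linarith
    linarith

-- Where both arches are positive, the ratio of the first to the second is decreasing.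
lemma eq_of_arch_eq_arch (ha : a < a') (hb : b < b') (h0 : 0 < h) (h0' : 0 < h')
    (hX : X ∈ Set.Ioo a' b) (heqX : h * ((X - a) * (b - X)) = h' * ((X - a') * (b' - X)))
    (hY : Y ∈ Set.Ioo a' b) (heqY : h * ((Y - a) * (b - Y)) = h' * ((Y - a') * (b' - Y))) :
    X = Y := by
  wlog hXY : X < Y generalizing X Y
  · exact (not_lt.1 hXY).eq_or_lt.elim Eq.symm fun h => (this hY heqY hX heqX h).symm
  obtain ⟨hX1, _⟩ := hX
  obtain ⟨_, hY2⟩ := hY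
  have hleft : (Y - a) * (X - a') < (X - a) * (Y - a') := by nlinarith
  have hright : (b - Y) * (b' - X) < (b - X) * (b' - Y) := by nlinarith
  have hlt : (Y - a) * (X - a') * ((b - Y) * (b' - X)) <
      (X - a) * (Y - a') * ((b - X) * (b' - Y)) :=
    mul_lt_mul'' hleft hright (mul_nonneg (by linarith) (by linarith))
      (mul_nonneg (by linarith) (by linarith))
  have hcross : h * h' * ((Y - a) * (X - a') * ((b - Y) * (b' - X))) =
      h * h' * ((X - a) * (Y - a') * ((b - X) * (b' - Y))) := by
    linear_combination h' * ((X - a') * (b' - X)) * heqY - h' * ((Y - a') * (b' - Y)) * heqX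
  exact absurd (mul_left_cancel₀ (mul_pos h0 h0').ne' hcross) hlt.ne

end Arches

section BookDrawing

variable {n : ℕ} {H : SimpleGraph (Fin n)} {ρ : Type*}

/-- The smaller endpoint of an edge. -/
def leftEnd (e : H.edgeSet) : ℕ := (e : Sym2 (Fin n)).inf

/-- The larger endpoint of an edge. -/
def rightEnd (e : H.edgeSet) : ℕ := (e : Sym2 (Fin n)).sup

/-- The endpoints of `e` and `f` alternate along the line, `e` starting first. -/
def Interlaces (e f : H.edgeSet) : Prop :=
  leftEnd e < leftEnd f ∧ leftEnd f < rightEnd e ∧ rightEnd e < rightEnd f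

instance : DecidableRel (Interlaces (H := H)) := fun _ _ => inferInstanceAs (Decidable (_ ∧ _))

/-- With the vertices on the spine of a book with two pages, where the edge `e` lies on the page
`ε e`, the edges `e` and `f` have to cross. -/
def CrossOnPage (ε : H.edgeSet → ℤˣ) (e f : H.edgeSet) : Prop :=
  ε e = ε f ∧ (Interlaces e f ∨ Interlaces f e)

instance (ε : H.edgeSet → ℤˣ) : DecidableRel (CrossOnPage ε) :=
  fun _ _ => inferInstanceAs (Decidable (_ ∧ _))

/-- The parabolic arch over the interval spanned by `e`. -/
def arch (e : H.edgeSet) (X : ℝ) : ℝ := (X - leftEnd e) * (rightEnd e - X)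

/-- The interval spanned by `e` on the spine. -/
def edgeInterval (e : H.edgeSet) : Set ℝ := Set.Icc (leftEnd e) (rightEnd e)

/-- The scaling factor of the arch of a strand: longer edges get steeper arches, and `y` separates
the strands along one edge. -/
def steepness (y : Option ρ ↪ Set.Ico (0 : ℝ) 1) (x : H.edgeSet × Option ρ) : ℝ :=
  rightEnd x.1 - leftEnd x.1 + y x.2

/-- The function whose graph carries a strand: an arch above or below the spine. -/
def strandCurve (ε : H.edgeSet → ℤˣ) (y : Option ρ ↪ Set.Ico (0 : ℝ) 1) (x : H.edgeSet × Option ρ)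
    (X : ℝ) : ℝ :=
  (ε x.1 : ℤ) * (steepness y x * arch x.1 X)

variable {ε : H.edgeSet → ℤˣ} {y : Option ρ ↪ Set.Ico (0 : ℝ) 1}

lemma arch_nonneg {e : H.edgeSet} {X : ℝ} (hX : X ∈ edgeInterval e) : 0 ≤ arch e X :=
  mul_nonneg (sub_nonneg.2 hX.1) (sub_nonneg.2 hX.2)

lemma leftEnd_lt_rightEnd (e : H.edgeSet) : leftEnd e < rightEnd e := by
  obtain ⟨⟨a, b⟩, he⟩ := e
  exact Fin.lt_def.1 (inf_lt_sup.2 (H.mem_edgeSet.1 he).ne)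

lemma leftEnd_add_one_le_rightEnd (e : H.edgeSet) : (leftEnd e : ℝ) + 1 ≤ rightEnd e := by
  exact_mod_cast leftEnd_lt_rightEnd e

lemma rightEnd_add_one_le (e : H.edgeSet) : (rightEnd e : ℝ) + 1 ≤ n := by
  exact_mod_cast (e : Sym2 (Fin n)).sup.2

lemma edge_eq_of_ends_eq {e f : H.edgeSet} (hl : leftEnd e = leftEnd f)
    (hr : rightEnd e = rightEnd f) : e = f :=
  Subtype.ext (Sym2.inf_eq_inf_and_sup_eq_sup.1 ⟨Fin.ext hl, Fin.ext hr⟩)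

lemma mem_edge_iff {e : H.edgeSet} {i : Fin n} :
    i ∈ (e : Sym2 (Fin n)) ↔ (i : ℕ) = leftEnd e ∨ (i : ℕ) = rightEnd e := by
  obtain ⟨⟨a, b⟩, he⟩ := e
  change i ∈ s(a, b) ↔ (i : ℕ) = (a ⊓ b : Fin n) ∨ (i : ℕ) = (a ⊔ b : Fin n)
  rw [Sym2.mem_iff, ← Fin.ext_iff, ← Fin.ext_iff]
  rcases le_total a b with h | h <;> simp [h, or_comm]

lemma one_le_steepness (x : H.edgeSet × Option ρ) : 1 ≤ steepness y x := by
  have := leftEnd_add_one_le_rightEnd x.1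
  have := (y x.2).2.1
  unfold steepness
  linarith

lemma steepness_le (x : H.edgeSet × Option ρ) : steepness y x ≤ n := by
  have := rightEnd_add_one_le x.1
  have : (0 : ℝ) ≤ leftEnd x.1 := Nat.cast_nonneg _
  have := (y x.2).2.2
  unfold steepness
  linarith

lemma unit_mul_eq_unit_mul_iff {u : ℤˣ} {r s : ℝ} : ((u : ℤ) : ℝ) * r = (u : ℤ) * s ↔ r = s :=
  mul_right_inj' (Int.cast_ne_zero.2 u.ne_zero)

lemma strandCurve_eq_zero_iff {x : H.edgeSet × Option ρ} {X : ℝ} :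
    strandCurve ε y x X = 0 ↔ arch x.1 X = 0 := by
  have : steepness y x ≠ 0 := (zero_lt_one.trans_le (one_le_steepness x)).ne'
  simp [strandCurve, this]

lemma separated_or_nested_or_interlaces (e f : H.edgeSet) :
    rightEnd e ≤ leftEnd f ∨ rightEnd f ≤ leftEnd e ∨
      (leftEnd e ≤ leftEnd f ∧ rightEnd f ≤ rightEnd e) ∨
      (leftEnd f ≤ leftEnd e ∧ rightEnd e ≤ rightEnd f) ∨ Interlaces e f ∨ Interlaces f e := by
  unfold Interlaces
  lia

lemma arch_eq_zero_of_separated {e f : H.edgeSet} {X : ℝ} (h : rightEnd e ≤ leftEnd f)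
    (hXe : X ∈ edgeInterval e) (hXf : X ∈ edgeInterval f) : arch e X = 0 ∧ arch f X = 0 := by
  have hle : (rightEnd e : ℝ) ≤ leftEnd f := by exact_mod_cast h
  have he : (rightEnd e : ℝ) = X := le_antisymm (hle.trans hXf.1) hXe.2
  have hf : (leftEnd f : ℝ) = X := le_antisymm hXf.1 (hXe.2.trans hle)
  simp [arch, he, hf]

lemma arch_eq_zero_of_nested_strands {x x' : H.edgeSet × Option ρ} (hne : x ≠ x') {X : ℝ}
    (hl : leftEnd x.1 ≤ leftEnd x'.1) (hr : rightEnd x'.1 ≤ rightEnd x.1)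
    (hX : X ∈ edgeInterval x'.1)
    (heq : steepness y x * arch x.1 X = steepness y x' * arch x'.1 X) :
    arch x.1 X = 0 ∧ arch x'.1 X = 0 := by
  by_cases hedge : x.1 = x'.1
  · have hy : steepness y x - steepness y x' ≠ 0 := by
      have : y x.2 ≠ y x'.2 := y.injective.ne fun h => hne (Prod.ext hedge h)
      simpa only [steepness, hedge, add_sub_add_left_eq_sub, ne_eq, sub_eq_zero,
        Subtype.ext_iff] using this
    have hzero : arch x.1 X = 0 := by
      rw [← hedge] at heq
      exact (mul_eq_zero.1 (by linear_combination heq : (_ - _) * _ = (0 : ℝ))).resolve_left hy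
    exact ⟨hzero, hedge ▸ hzero⟩
  · have hlt : (rightEnd x'.1 : ℝ) + leftEnd x.1 + 1 ≤ rightEnd x.1 + leftEnd x'.1 := by
      have := fun h => mt (edge_eq_of_ends_eq h) hedge
      norm_cast
      lia
    refine arch_eq_zero_of_nested (h := steepness y x) (h' := steepness y x') (by exact_mod_cast hl)
      (by exact_mod_cast hr) hX (zero_le_one.trans (one_le_steepness x')) ?_ heq
    have := (y x.2).2.1
    have := (y x'.2).2.2
    unfold steepness
    linarith

lemma arch_eq_zero_or_crossOnPage {x x' : H.edgeSet × Option ρ} (hne : x ≠ x') {X : ℝ}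
    (hX : X ∈ edgeInterval x.1) (hX' : X ∈ edgeInterval x'.1)
    (heq : strandCurve ε y x X = strandCurve ε y x' X) :
    (arch x.1 X = 0 ∧ arch x'.1 X = 0) ∨ CrossOnPage ε x.1 x'.1 := by
  by_cases hε : ε x.1 = ε x'.1
  · rw [strandCurve, strandCurve, hε, unit_mul_eq_unit_mul_iff] at heq
    rcases separated_or_nested_or_interlaces x.1 x'.1 with h | h | ⟨hl, hr⟩ | ⟨hl, hr⟩ | h
    · exact .inl (arch_eq_zero_of_separated h hX hX')
    · exact .inl (arch_eq_zero_of_separated h hX' hX).symm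
    · exact .inl (arch_eq_zero_of_nested_strands hne hl hr hX' heq)
    · exact .inl (arch_eq_zero_of_nested_strands hne.symm hl hr hX heq.symm).symm
    · exact .inr ⟨hε, h⟩
  · rw [strandCurve, strandCurve, Int.units_ne_iff_eq_neg.1 hε, Units.val_neg, Int.cast_neg,
      neg_mul, ← mul_neg, unit_mul_eq_unit_mul_iff] at heq
    have := one_le_steepness (y := y) x
    have := one_le_steepness (y := y) x'
    have := arch_nonneg hX
    have := arch_nonneg hX'
    left
    constructor <;> nlinarith

/-- The distance of a new vertex from the left end of its edge, chosen so small that the vertex is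
to the left of every crossing on its strand. -/
noncomputable def markerShift (n : ℕ) : ℝ := ((n : ℝ) ^ 2 + 2)⁻¹

lemma markerShift_pos : 0 < markerShift n := by
  unfold markerShift
  positivity

lemma sq_mul_markerShift_lt_one : (n : ℝ) ^ 2 * markerShift n < 1 := by
  rw [markerShift, mul_inv_lt_iff₀ (by positivity)]
  linarith

lemma two_mul_markerShift_le_one : 2 * markerShift n ≤ 1 := by
  rw [markerShift, mul_inv_le_iff₀ (by positivity)]
  nlinarith [sq_nonneg (n : ℝ)]

/-- The abscissa of the new vertices attached to the edge `e`. -/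
noncomputable def marker (e : H.edgeSet) : ℝ := leftEnd e + markerShift n

lemma mem_Ioo_of_interlaces {x x' : H.edgeSet × Option ρ} (hint : Interlaces x.1 x'.1)
    {X : ℝ} (hX : X ∈ edgeInterval x.1) (hX' : X ∈ edgeInterval x'.1)
    (heq : steepness y x * arch x.1 X = steepness y x' * arch x'.1 X) :
    X ∈ Set.Ioo (marker x'.1) (rightEnd x.1 : ℝ) := by
  obtain ⟨h1, h2, h3⟩ := hint
  have h1 : (leftEnd x.1 : ℝ) + 1 ≤ leftEnd x'.1 := by exact_mod_cast h1
  have h2 : (leftEnd x'.1 : ℝ) + 1 ≤ rightEnd x.1 := by exact_mod_cast h2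
  have := rightEnd_add_one_le x'.1
  have : (0 : ℝ) ≤ leftEnd x'.1 := Nat.cast_nonneg _
  refine mem_Ioo_of_arch_eq_arch h1 h2 (by exact_mod_cast h3) (by linarith) ?_
    (zero_lt_one.trans_le (one_le_steepness x')) (steepness_le x') sq_mul_markerShift_lt_one
    two_mul_markerShift_le_one ⟨hX'.1, hX.2⟩ heq
  have := (y x.2).2.1
  unfold steepness
  linarith

lemma marker_lt_of_crossOnPage {x x' : H.edgeSet × Option ρ} (hcross : CrossOnPage ε x.1 x'.1)
    {X : ℝ} (hX : X ∈ edgeInterval x.1) (hX' : X ∈ edgeInterval x'.1)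
    (heq : strandCurve ε y x X = strandCurve ε y x' X) :
    marker x.1 < X := by
  obtain ⟨hε, hint⟩ := hcross
  rw [strandCurve, strandCurve, hε, unit_mul_eq_unit_mul_iff] at heq
  rcases hint with hint | hint
  · refine lt_trans ?_ (mem_Ioo_of_interlaces hint hX hX' heq).1
    exact add_lt_add_left (Nat.cast_lt.2 hint.1) _
  · exact (mem_Ioo_of_interlaces hint hX' hX heq.symm).1

lemma eq_of_crossOnPage {x x' : H.edgeSet × Option ρ} (hcross : CrossOnPage ε x.1 x'.1)
    {X Y : ℝ} (hX : X ∈ edgeInterval x.1) (hX' : X ∈ edgeInterval x'.1)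
    (heqX : strandCurve ε y x X = strandCurve ε y x' X)
    (hY : Y ∈ edgeInterval x.1) (hY' : Y ∈ edgeInterval x'.1)
    (heqY : strandCurve ε y x Y = strandCurve ε y x' Y) : X = Y := by
  obtain ⟨hε, hint⟩ := hcross
  rw [strandCurve, strandCurve, hε, unit_mul_eq_unit_mul_iff] at heqX heqY
  wlog h : Interlaces x.1 x'.1 generalizing x x'
  · exact this hX' hX heqX.symm hY' hY heqY.symm hε.symm hint.symm (hint.resolve_left h)
  have hIoo : Set.Ioo (marker x'.1) (rightEnd x.1 : ℝ) ⊆ Set.Ioo ↑(leftEnd x'.1) ↑(rightEnd x.1) :=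
    Set.Ioo_subset_Ioo_left (le_add_of_nonneg_right markerShift_pos.le)
  exact eq_of_arch_eq_arch (Nat.cast_lt.2 h.1) (Nat.cast_lt.2 h.2.2)
    (zero_lt_one.trans_le (one_le_steepness x)) (zero_lt_one.trans_le (one_le_steepness x'))
    (hIoo (mem_Ioo_of_interlaces h hX hX' heqX)) heqX
    (hIoo (mem_Ioo_of_interlaces h hY hY' heqY)) heqY

lemma marker_mem_Ioo (e : H.edgeSet) : marker e ∈ Set.Ioo (leftEnd e : ℝ) (rightEnd e) := by
  have := leftEnd_add_one_le_rightEnd e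
  have := markerShift_pos (n := n)
  have := two_mul_markerShift_le_one (n := n)
  constructor <;> unfold marker <;> linarith

lemma marker_mem_edgeInterval (e : H.edgeSet) : marker e ∈ edgeInterval e :=
  Set.Ioo_subset_Icc_self (marker_mem_Ioo e)

lemma arch_marker_ne_zero (e : H.edgeSet) : arch e (marker e) ≠ 0 :=
  (mul_pos (sub_pos.2 (marker_mem_Ioo e).1) (sub_pos.2 (marker_mem_Ioo e).2)).ne'

lemma arch_eq_zero_iff {e : H.edgeSet} {X : ℝ} :
    arch e X = 0 ↔ ∃ i ∈ (e : Sym2 (Fin n)), (i : ℝ) = X := by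
  rw [arch, mul_eq_zero, sub_eq_zero, sub_eq_zero]
  constructor
  · rintro (rfl | rfl)
    exacts [⟨_, mem_edge_iff.2 (.inl rfl), rfl⟩, ⟨_, mem_edge_iff.2 (.inr rfl), rfl⟩]
  · rintro ⟨i, hi, rfl⟩
    rcases mem_edge_iff.1 hi with h | h <;> simp [h]

lemma arch_natCast_eq_zero_iff {e : H.edgeSet} {i : Fin n} :
    arch e (i : ℝ) = 0 ↔ i ∈ (e : Sym2 (Fin n)) := by
  simp [arch_eq_zero_iff, Fin.val_inj]

lemma sub_marker_mul_sub_marker_neg {e : H.edgeSet} {a b : Fin n} (ha : a ∈ (e : Sym2 (Fin n)))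
    (hb : b ∈ (e : Sym2 (Fin n))) (hab : a ≠ b) : (a - marker e) * (b - marker e) < 0 := by
  obtain ⟨hl, hr⟩ := marker_mem_Ioo e
  rcases mem_edge_iff.1 ha with ha | ha <;> rcases mem_edge_iff.1 hb with hb | hb
  · exact absurd (Fin.ext (ha.trans hb.symm)) hab
  · rw [ha, hb]
    exact mul_neg_of_neg_of_pos (sub_neg.2 hl) (sub_pos.2 hr)
  · rw [ha, hb]
    exact mul_neg_of_pos_of_neg (sub_pos.2 hr) (sub_neg.2 hl)
  · exact absurd (Fin.ext (ha.trans hb.symm)) hab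

lemma eq_of_strandCurve_marker_eq {x x' : H.edgeSet × Option ρ}
    (hx : marker x'.1 ∈ edgeInterval x.1)
    (heq : strandCurve ε y x (marker x'.1) = strandCurve ε y x' (marker x'.1)) : x = x' := by
  by_contra hne
  have hx' := marker_mem_edgeInterval x'.1
  rcases arch_eq_zero_or_crossOnPage (Ne.symm hne) hx' hx heq.symm with ⟨h, -⟩ | hcross
  · exact arch_marker_ne_zero _ h
  · exact (marker_lt_of_crossOnPage hcross hx' hx heq.symm).false

lemma continuous_strandCurve (x : H.edgeSet × Option ρ) : Continuous (strandCurve ε y x) := by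
  unfold strandCurve arch
  fun_prop

/-- The positions of the vertices of the thickening: those of `H` on the spine in their order, the
new ones on their strands, close to the left end. -/
noncomputable def bookPos (ε : H.edgeSet → ℤˣ) (y : Option ρ ↪ Set.Ico (0 : ℝ) 1) :
    Fin n ⊕ H.edgeSet × ρ → ℝ × ℝ
  | .inl i => (i, 0)
  | .inr (e, j) => (marker e, strandCurve ε y (e, some j) (marker e))

lemma bookPos_injective : Function.Injective (bookPos ε y) := by
  rintro (i | ⟨e, j⟩) (i' | ⟨e', j'⟩) h <;> obtain ⟨h1, h2⟩ := Prod.ext_iff.1 h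
  · exact congrArg _ (Fin.ext (Nat.cast_injective h1))
  · exact absurd (strandCurve_eq_zero_iff.1 h2.symm) (arch_marker_ne_zero e')
  · exact absurd (strandCurve_eq_zero_iff.1 h2) (arch_marker_ne_zero e)
  · have h1 : marker e = marker e' := h1
    have h2 : strandCurve ε y (e, some j) (marker e) = strandCurve ε y (e', some j') (marker e') :=
      h2
    have hx := eq_of_strandCurve_marker_eq (x := (e, some j)) (x' := (e', some j'))
      (h1 ▸ marker_mem_edgeInterval e) (h1 ▸ h2)
    simpa using hx

lemma bookPos_mem_edgeInterval {x : H.edgeSet × Option ρ} {g : Sym2 (Fin n ⊕ H.edgeSet × ρ)}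
    (hg : g ∈ strand x) {v} (hv : v ∈ g) : (bookPos ε y v).1 ∈ edgeInterval x.1 := by
  have hle := (leftEnd_lt_rightEnd x.1).le
  rcases v with i | ⟨e, j⟩
  · rcases mem_edge_iff.1 (mem_of_inl_mem hg hv) with h | h
    all_goals simp [bookPos, edgeInterval, h, hle]
  · obtain rfl := (inr_mem_iff hg).1 hv
    exact marker_mem_edgeInterval e

lemma strandCurve_bookPos {x : H.edgeSet × Option ρ} {g : Sym2 (Fin n ⊕ H.edgeSet × ρ)}
    (hg : g ∈ strand x) {v} (hv : v ∈ g) :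
    strandCurve ε y x (bookPos ε y v).1 = (bookPos ε y v).2 := by
  rcases v with i | ⟨e, j⟩
  · exact strandCurve_eq_zero_iff.2 (arch_natCast_eq_zero_iff.2 (mem_of_inl_mem hg hv))
  · obtain rfl := (inr_mem_iff hg).1 hv
    rfl

lemma mem_edgeInterval_of_mem_Icc {x : H.edgeSet × Option ρ} {g : Sym2 (Fin n ⊕ H.edgeSet × ρ)}
    (hg : g ∈ strand x) {u v} (hu : u ∈ g) (hv : v ∈ g) {X : ℝ}
    (hX : X ∈ Set.Icc (bookPos ε y u).1 (bookPos ε y v).1) : X ∈ edgeInterval x.1 :=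
  Set.Icc_subset_Icc (bookPos_mem_edgeInterval hg hu).1 (bookPos_mem_edgeInterval hg hv).2 hX

-- The two edges of a strand through a new vertex lie on different sides of that vertex.
lemma sub_marker_mul_sub_marker_nonneg {e : H.edgeSet} {j : ρ} {a : Fin n} {u v}
    (hu : u ∈ s(.inl a, .inr (e, j))) (hv : v ∈ s(.inl a, .inr (e, j))) {X : ℝ}
    (hX : X ∈ Set.Icc (bookPos ε y u).1 (bookPos ε y v).1) :
    0 ≤ (X - marker e) * (a - marker e) := by
  obtain ⟨hX1, hX2⟩ := hX
  rcases Sym2.mem_iff.1 hu with rfl | rfl <;> rcases Sym2.mem_iff.1 hv with rfl | rfl <;>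
    simp only [bookPos] at hX1 hX2
  · obtain rfl := hX2.antisymm hX1
    exact mul_self_nonneg _
  · exact mul_nonneg_of_nonpos_of_nonpos (by linarith) (by linarith)
  · exact mul_nonneg (by linarith) (by linarith)
  · rw [hX2.antisymm hX1, sub_self, zero_mul]

lemma fst_bookPos_ne_of_adj {u v : Fin n ⊕ H.edgeSet × ρ} (h : (thickening H ρ).Adj u v) :
    (bookPos ε y u).1 ≠ (bookPos ε y v).1 := by
  have hne (i : Fin n) (e : H.edgeSet) (hi : i ∈ (e : Sym2 (Fin n))) : (i : ℝ) ≠ marker e :=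
    fun h => arch_marker_ne_zero e (arch_eq_zero_iff.2 ⟨i, hi, h⟩)
  rcases u with i | x <;> rcases v with i' | x'
  · exact fun heq => H.ne_of_adj h (Fin.ext (Nat.cast_injective heq))
  · exact hne i x'.1 h
  · exact (hne i' x.1 h).symm
  · exact h.elim

lemma mem_of_strandCurve_bookPos_eq {x : H.edgeSet × Option ρ}
    {g : Sym2 (Fin n ⊕ H.edgeSet × ρ)} (hg : g ∈ strand x) {u v w} (hu : u ∈ g) (hv : v ∈ g)
    (hw : (bookPos ε y w).1 ∈ Set.Icc (bookPos ε y u).1 (bookPos ε y v).1)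
    (heq : strandCurve ε y x (bookPos ε y w).1 = (bookPos ε y w).2) : w ∈ g := by
  rcases w with i | ⟨e, j⟩
  · have hi : i ∈ (x.1 : Sym2 (Fin n)) :=
      arch_natCast_eq_zero_iff.1 (strandCurve_eq_zero_iff.1 heq)
    obtain ⟨e, _ | j⟩ := x
    · obtain rfl := hg
      exact Sym2.mem_map.2 ⟨i, hi, rfl⟩
    · obtain ⟨a, ha, rfl⟩ := hg
      have hnonneg := sub_marker_mul_sub_marker_nonneg hu hv hw
      obtain rfl : i = a := by_contra fun hne =>
        hnonneg.not_gt (sub_marker_mul_sub_marker_neg hi ha hne)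
      exact Sym2.mem_mk_left _ _
  · exact (inr_mem_iff hg).2
      (eq_of_strandCurve_marker_eq (mem_edgeInterval_of_mem_Icc hg hu hv hw) heq)

/-- The drawing of the thickening of `H` in a book with two pages and spine the `x`-axis, where all
strands along the edge `e` lie on the page `ε e`. -/
noncomputable def bookDrawing (ε : H.edgeSet → ℤˣ) (y : Option ρ ↪ Set.Ico (0 : ℝ) 1) :
    Drawing (thickening H ρ) :=
  monotoneDrawing (bookPos ε y) bookPos_injective (fun g => strandCurve ε y (strandOf g))
    (fun _ => continuous_strandCurve _) (fun _ _ => fst_bookPos_ne_of_adj)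
    (fun g _ => strandCurve_bookPos (mem_strand_strandOf g))
    (fun g _ hu _ hv _ => mem_of_strandCurve_bookPos_eq (mem_strand_strandOf g) hu hv)

variable {g g' : (thickening H ρ).edgeSet} {q : ℝ × ℝ}

lemma strandCurve_eq_of_mem_range_arc (hg : q ∈ Set.range ((bookDrawing ε y).arc g)) :
    strandCurve ε y (strandOf g) q.1 = q.2 :=
  (exists_of_mem_range_arc_monotoneDrawing hg).1

lemma mem_edgeInterval_of_mem_range_arc (hg : q ∈ Set.range ((bookDrawing ε y).arc g)) :
    q.1 ∈ edgeInterval (strandOf g).1 := by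
  obtain ⟨-, u, hu, v, hv, hq⟩ := exists_of_mem_range_arc_monotoneDrawing hg
  exact mem_edgeInterval_of_mem_Icc (mem_strand_strandOf g) hu hv hq

lemma exists_common_vertex_of_strandOf_eq (hne : g ≠ g') (hstrand : strandOf g = strandOf g')
    (hg : q ∈ Set.range ((bookDrawing ε y).arc g))
    (hg' : q ∈ Set.range ((bookDrawing ε y).arc g')) :
    ∃ v, v ∈ (g : Sym2 (Fin n ⊕ H.edgeSet × ρ)) ∧ v ∈ (g' : Sym2 (Fin n ⊕ H.edgeSet × ρ)) ∧
      q = (bookDrawing ε y).pos v := by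
  obtain ⟨hcurve, u, hu, v, hv, hq⟩ := exists_of_mem_range_arc_monotoneDrawing hg
  obtain ⟨-, u', hu', v', hv', hq'⟩ := exists_of_mem_range_arc_monotoneDrawing hg'
  have hmem := mem_strand_strandOf g
  have hmem' := hstrand ▸ mem_strand_strandOf g'
  generalize strandOf g = x at hmem hmem' hcurve
  obtain ⟨e, _ | j⟩ := x
  · exact absurd (Subtype.ext (hmem.trans hmem'.symm)) hne
  obtain ⟨a, ha, hga⟩ := hmem
  obtain ⟨a', ha', hga'⟩ := hmem'
  rw [hga] at hu hv
  rw [hga'] at hu' hv'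
  have haa' : a ≠ a' := by
    rintro rfl
    exact hne (Subtype.ext (hga.trans hga'.symm))
  have hq1 : q.1 = marker e := by
    by_contra hne
    have hneg := mul_neg_of_pos_of_neg (mul_self_pos.2 (sub_ne_zero.2 hne))
      (sub_marker_mul_sub_marker_neg ha ha' haa')
    have hnonneg := mul_nonneg (sub_marker_mul_sub_marker_nonneg hu hv hq)
      (sub_marker_mul_sub_marker_nonneg hu' hv' hq')
    linarith
  exact ⟨.inr (e, j), hga ▸ Sym2.mem_mk_right _ _, hga' ▸ Sym2.mem_mk_right _ _,
    Prod.ext hq1 (by rw [← hcurve, hq1]; rfl)⟩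

lemma crossOnPage_of_mem_crossingTriples (h : (q, g, g') ∈ crossingTriples (bookDrawing ε y)) :
    CrossOnPage ε (strandOf g).1 (strandOf g').1 := by
  obtain ⟨hne, hg, hg', hends⟩ := h
  dsimp only at hne hg hg' hends
  have hcurve := strandCurve_eq_of_mem_range_arc hg
  have hstrand : strandOf g ≠ strandOf g' := fun h =>
    hends (exists_common_vertex_of_strandOf_eq hne h hg hg')
  refine (arch_eq_zero_or_crossOnPage hstrand (mem_edgeInterval_of_mem_range_arc hg)
    (mem_edgeInterval_of_mem_range_arc hg')
    (hcurve.trans (strandCurve_eq_of_mem_range_arc hg').symm)).resolve_left ?_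
  rintro ⟨h, -⟩
  obtain ⟨i, -, hi⟩ := arch_eq_zero_iff.1 h
  have hq : (bookDrawing ε y).pos (.inl i) = q :=
    Prod.ext hi ((strandCurve_eq_zero_iff.2 h).symm.trans hcurve)
  obtain ⟨t, ht⟩ := hg
  obtain ⟨t', ht'⟩ := hg'
  exact hends ⟨.inl i, (bookDrawing ε y).arc_avoid _ _ t (ht.trans hq.symm),
    (bookDrawing ε y).arc_avoid _ _ t' (ht'.trans hq.symm), hq.symm⟩

lemma eq_of_strandOf_eq_of_mem_crossingTriples {f : (thickening H ρ).edgeSet}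
    (h : (q, g, g') ∈ crossingTriples (bookDrawing ε y))
    (hf : q ∈ Set.range ((bookDrawing ε y).arc f)) (hstrand : strandOf g = strandOf f) :
    g = f := by
  obtain ⟨-, hg, ⟨t, ht⟩, hends⟩ := h
  by_contra hne
  obtain ⟨v, hv, -, hq⟩ := exists_common_vertex_of_strandOf_eq hne hstrand hg hf
  exact hends ⟨v, hv, (bookDrawing ε y).arc_avoid _ _ t (ht.trans hq), hq⟩

lemma injOn_strandOf_crossingTriples :
    Set.InjOn (fun q => (((strandOf q.2.1).1, (strandOf q.2.2).1),
      ((strandOf q.2.1).2, (strandOf q.2.2).2))) (crossingTriples (bookDrawing ε y)) := by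
  rintro ⟨p, g, g'⟩ hp ⟨q, f, f'⟩ hq heq
  simp only [Prod.mk.injEq] at heq
  have hstrand : strandOf g = strandOf f := Prod.ext heq.1.1 heq.2.1
  have hstrand' : strandOf g' = strandOf f' := Prod.ext heq.1.2 heq.2.2
  have hcurve {p} {g : (thickening H ρ).edgeSet} (hg : p ∈ Set.range ((bookDrawing ε y).arc g)) :=
    strandCurve_eq_of_mem_range_arc hg
  have hpq : p.1 = q.1 := eq_of_crossOnPage (crossOnPage_of_mem_crossingTriples hp)
    (mem_edgeInterval_of_mem_range_arc hp.2.1) (mem_edgeInterval_of_mem_range_arc hp.2.2.1)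
    ((hcurve hp.2.1).trans (hcurve hp.2.2.1).symm)
    (hstrand ▸ mem_edgeInterval_of_mem_range_arc hq.2.1)
    (hstrand' ▸ mem_edgeInterval_of_mem_range_arc hq.2.2.1)
    (hstrand ▸ hstrand' ▸ (hcurve hq.2.1).trans (hcurve hq.2.2.1).symm)
  obtain rfl : p = q := Prod.ext hpq (by
    rw [← hcurve hp.2.1, ← hcurve hq.2.1, hpq]
    exact hstrand ▸ rfl)
  rw [eq_of_strandOf_eq_of_mem_crossingTriples hp hq.2.1 hstrand,
    eq_of_strandOf_eq_of_mem_crossingTriples (swap_mem_crossingTriples hp) hq.2.2.1 hstrand']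

theorem exists_ncard_crossingTriples_thickening_le [Fintype H.edgeSet] [Fintype ρ]
    (ε : H.edgeSet → ℤˣ) :
    ∃ D : Drawing (thickening H ρ), (crossingTriples D).Finite ∧ (crossingTriples D).ncard ≤
      #{p : H.edgeSet × H.edgeSet | CrossOnPage ε p.1 p.2} * (Fintype.card ρ + 1) ^ 2 := by
  have : Infinite (Set.Ico (0 : ℝ) 1) := (Set.Ico_infinite zero_lt_one).to_subtype
  let y : Option ρ ↪ Set.Ico (0 : ℝ) 1 :=
    ((Fintype.equivFin _).toEmbedding.trans Fin.valEmbedding).trans (Infinite.natEmbedding _)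
  let T : Finset ((H.edgeSet × H.edgeSet) × Option ρ × Option ρ) :=
    ({p | CrossOnPage ε p.1 p.2} : Finset (H.edgeSet × H.edgeSet)) ×ˢ univ
  have hT : #T = #{p : H.edgeSet × H.edgeSet | CrossOnPage ε p.1 p.2} *
      (Fintype.card ρ + 1) ^ 2 := by
    rw [card_product, card_univ, Fintype.card_prod, Fintype.card_option, sq]
  have hmaps : Set.MapsTo (fun q => (((strandOf q.2.1).1, (strandOf q.2.2).1),
      ((strandOf q.2.1).2, (strandOf q.2.2).2))) (crossingTriples (bookDrawing ε y)) T :=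
    fun q hq => by simpa [T] using crossOnPage_of_mem_crossingTriples hq
  have hinj := injOn_strandOf_crossingTriples (ε := ε) (y := y)
  refine ⟨bookDrawing ε y, T.finite_toSet.of_injOn hmaps hinj, ?_⟩
  rw [← hT, ← Set.ncard_coe_finset]
  exact Set.ncard_le_ncard_of_injOn _ hmaps hinj T.finite_toSet

end BookDrawing

/-! ### The thickened `K₅` -/

section PentagonCopies

/-- The page of each edge in a drawing of `K₅` in a book with two pages that has one crossing. -/
def pageOfEdge (e : (⊤ : SimpleGraph (Fin 5)).edgeSet) : ℤˣ :=
  if (e : Sym2 (Fin 5)) ∈ ({s(0, 3), s(1, 3), s(1, 4)} : Finset (Sym2 (Fin 5))) then -1 else 1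

lemma card_crossOnPage_pageOfEdge :
    #{p : (⊤ : SimpleGraph (Fin 5)).edgeSet × (⊤ : SimpleGraph (Fin 5)).edgeSet |
      CrossOnPage pageOfEdge p.1 p.2} = 2 := by
  decide

variable (ρ : Type*) [Fintype ρ]

lemma exists_drawing_thickening_top_fin_five :
    ∃ D : Drawing (thickening (⊤ : SimpleGraph (Fin 5)) ρ), (crossingTriples D).Finite ∧
      (crossingTriples D).ncard ≤ 2 * (Fintype.card ρ + 1) ^ 2 :=
  card_crossOnPage_pageOfEdge ▸ exists_ncard_crossingTriples_thickening_le pageOfEdge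

theorem crossingNumber_thickening_top_fin_five :
    crossingNumber (thickening (⊤ : SimpleGraph (Fin 5)) ρ) = (Fintype.card ρ + 1) ^ 2 := by
  obtain ⟨D, hfin, hD⟩ := exists_drawing_thickening_top_fin_five ρ
  exact crossingNumber_eq_of_forall_le hfin hD fun _ =>
    two_mul_sq_le_ncard_crossingTriples independentEdgesMeet_top_fin_five

lemma connected_completeBipartiteGraph {α β : Type*} [Nonempty α] [Nonempty β] :
    (completeBipartiteGraph α β).Connected := by
  inhabit α
  inhabit β
  have hadj (a : α) (b : β) : (completeBipartiteGraph α β).Adj (.inl a) (.inr b) := by simp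
  refine SimpleGraph.connected_iff_exists_forall_reachable _ |>.2 ⟨.inl default, ?_⟩
  rintro (a | b)
  · exact (hadj default default).reachable.trans (hadj a default).symm.reachable
  · exact (hadj default b).reachable

section CompleteBipartite

variable {α β : Type*} [Fintype α] [Fintype β] [DecidableRel (completeBipartiteGraph α β).Adj]

lemma degree_completeBipartiteGraph_inl (a : α) :
    (completeBipartiteGraph α β).degree (.inl a) = Fintype.card β := by
  have hnbr : (completeBipartiteGraph α β).neighborFinset (.inl a) =
      univ.map Function.Embedding.inr := by
    ext (x | x) <;> simp
  rw [← SimpleGraph.card_neighborFinset_eq_degree, hnbr, card_map, card_univ]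

lemma degree_completeBipartiteGraph_inr (b : β) :
    (completeBipartiteGraph α β).degree (.inr b) = Fintype.card α := by
  have hnbr : (completeBipartiteGraph α β).neighborFinset (.inr b) =
      univ.map Function.Embedding.inl := by
    ext (x | x) <;> simp
  rw [← SimpleGraph.card_neighborFinset_eq_degree, hnbr, card_map, card_univ]

end CompleteBipartite

lemma not_isMinor_copies_thickening (ι ρ : Type*) :
    ¬IsMinor (completeBipartiteGraph (Fin 3) (Fin 3))
      (copies ι (thickening (⊤ : SimpleGraph (Fin 5)) ρ)) := by
  classical
  intro h
  have hdeg (a : Fin 3 ⊕ Fin 3) : 3 ≤ (completeBipartiteGraph (Fin 3) (Fin 3)).degree a := by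
    rcases a with a | a <;>
      simp [degree_completeBipartiteGraph_inl, degree_completeBipartiteGraph_inr]
  have hle := card_le_of_isMinor_thickening hdeg
    (isMinor_of_isMinor_copies connected_completeBipartiteGraph h)
  simp at hle

lemma card_copies_thickening_top_fin_five (m r : ℕ) :
    Fintype.card (Fin m × (Fin 5 ⊕ (⊤ : SimpleGraph (Fin 5)).edgeSet × Fin r)) =
      5 * (2 * r + 1) * m := by
  have hedges : Fintype.card (⊤ : SimpleGraph (Fin 5)).edgeSet = 10 := by decide
  simp only [Fintype.card_prod, Fintype.card_sum, Fintype.card_fin, hedges]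
  ring

lemma crossingNumber_copies_thickening_top_fin_five (m r : ℕ) :
    crossingNumber (copies (Fin m) (thickening (⊤ : SimpleGraph (Fin 5)) (Fin r))) =
      m * (r + 1) ^ 2 := by
  obtain ⟨D, hD, -⟩ := exists_drawing_thickening_top_fin_five (Fin r)
  rw [crossingNumber_copies ⟨D, hD⟩, crossingNumber_thickening_top_fin_five, Fintype.card_fin,
    Fintype.card_fin]

lemma cast_mul_sq_eq_mul_div_mul (m r : ℕ) :
    ((m * (r + 1) ^ 2 : ℕ) : ℝ) = ((4 * (r + 1) : ℕ) : ℝ) * (5 * (2 * r + 1) * m : ℕ) / 40 *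
      (1 + 2 / (((4 * (r + 1) : ℕ) : ℝ) - 2)) := by
  have hsub : 4 * ((r : ℝ) + 1) - 2 = 2 * (2 * r + 1) := by ring
  push_cast
  rw [hsub]
  field_simp
  ring

end PentagonCopies

/-- For all positive integers `Δ` and `n` with `Δ ≡ 0 (mod 4)` and
`n ≡ 0 (mod 5(Δ/2 − 1))`, there is a chordal `K_{3,3}`-minor-free graph `G` on `n`
vertices with maximum degree `Δ` and crossing number
`cr(G) = (Δn/40)·(1 + 2/(Δ−2)) > Δn/40`. -/
theorem stmt_15 (Δ n : ℕ) (hΔ : 0 < Δ) (hn : 0 < n) (hΔ4 : 4 ∣ Δ)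
    (hdvd : 5 * (Δ / 2 - 1) ∣ n) :
    ∃ (G : SimpleGraph (Fin n)) (_ : DecidableRel G.Adj),
      HasPerfectEliminationOrdering G ∧
      ¬ IsMinor (completeBipartiteGraph (Fin 3) (Fin 3)) G ∧
      G.maxDegree = Δ ∧
      (crossingNumber G : ℝ) = ((Δ : ℝ) * n / 40) * (1 + 2 / ((Δ : ℝ) - 2)) ∧
      (Δ : ℝ) * n / 40 < (crossingNumber G : ℝ) := by
  classical
  obtain ⟨r, rfl⟩ : ∃ r, Δ = 4 * (r + 1) := ⟨Δ / 4 - 1, by lia⟩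
  obtain ⟨m, rfl⟩ := hdvd
  have hr : 4 * (r + 1) / 2 - 1 = 2 * r + 1 := by lia
  rw [hr] at hn ⊢
  have : NeZero m := ⟨(Nat.pos_of_mul_pos_left hn).ne'⟩
  let G := copies (Fin m) (thickening (⊤ : SimpleGraph (Fin 5)) (Fin r))
  let φ := SimpleGraph.Iso.comap
    (Fintype.equivFinOfCardEq (card_copies_thickening_top_fin_five m r)).symm G
  have hcr := (crossingNumber_congr φ).trans (crossingNumber_copies_thickening_top_fin_five m r)
  have hpeo : HasPerfectEliminationOrdering G := hasPerfectEliminationOrdering_copies <|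
    hasPerfectEliminationOrdering_thickening hasPerfectEliminationOrdering_top
  refine ⟨_, inferInstance, hpeo.comap φ.toEmbedding,
    fun h => not_isMinor_copies_thickening _ _ (h.map φ.toHom φ.injective), ?_, ?_, ?_⟩
  · rw [φ.maxDegree_eq, maxDegree_copies, maxDegree_thickening, SimpleGraph.maxDegree_top]
    simp
  · rw [hcr, cast_mul_sq_eq_mul_div_mul]
  · have hΔ2 : (2 : ℝ) < (4 * (r + 1) : ℕ) := by norm_cast; lia
    rw [hcr, cast_mul_sq_eq_mul_div_mul]
    exact lt_mul_of_one_lt_right (by positivity)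
      (lt_add_of_pos_right 1 (div_pos two_pos (sub_pos.2 hΔ2)))
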